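/- arXiv:2301.11352 — 2 statements merged into one kernel-verified Lean document; each statement's English description precedes it below -/
import Mathlib

section
/- Let $d\ge 5$, $k\in\mathbb{N}$, $1\le j\le\log_2(k)-2$, and set $\varepsilon=2^{-2k}$. For $t\in[0,1]$ define $s_t:\mathbb{Z}^d\to\mathbb{C}$ by $s_t(m)=e^{2\pi i|m|^2(t+i\varepsilon)}$ and $\widehat{s_t}(\alpha)=\sum_{m\in\mathbb{Z}^d}s_t(m)e^{-2\pi i m\cdot\alpha}$. Then there is a constant $C_d$ such that $\int_0^1\sup_{\alpha\in\Omega_{j,k}^c}|\widehat{s_t}(\alpha)|\,dt\le C_d\,\varepsilon^{-(d-2)/2}\,2^{-j/2}\,j^{-1}$. -/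
open scoped BigOperators Real

noncomputable section

/-- Squared Euclidean norm of a lattice point, as a real number. -/
def nsq {d : ℕ} (m : Fin d → ℤ) : ℝ := ∑ i, ((m i : ℝ)) ^ 2

/-- `s_t(m) = e^{2πi|m|²(t+iε)}`. -/
def sFun {d : ℕ} (ε t : ℝ) (m : Fin d → ℤ) : ℂ :=
  Complex.exp (2 * (π : ℂ) * Complex.I * (nsq m : ℝ) * ((t : ℂ) + Complex.I * (ε : ℝ)))

/-- The Fourier transform `ŝ_t(α) = ∑_m s_t(m) e^{-2πi m·α}`. -/
def sHat {d : ℕ} (ε t : ℝ) (α : Fin d → ℝ) : ℂ :=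
  ∑' m : Fin d → ℤ,
    sFun ε t m * Complex.exp (-(2 * (π : ℂ) * Complex.I) * (∑ i, (m i : ℝ) * α i))

/-- `q_j = lcm{1,2,…,2^j}`. -/
def qlcm (j : ℕ) : ℕ := (Finset.Icc 1 (2 ^ j)).lcm id

/-- `Ω_{j,k} = [-2^{j-k}, 2^{j-k}]^d + (q_j⁻¹ ℤ)^d`, viewed as the (ℤ^d-periodic)
set of representatives in `ℝ^d` of the corresponding subset of `𝕋^d`. -/
def OmegaJK (d j k : ℕ) : Set (Fin d → ℝ) :=
  {α | ∃ ℓ : Fin d → ℤ, ∀ i, |α i - (ℓ i : ℝ) / (qlcm j : ℝ)| ≤ (2 : ℝ) ^ ((j : ℤ) - (k : ℤ))}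

lemma prime_card_aux (i : ℕ) :
    i * ((Finset.Ico (2 ^ i) (2 ^ (i + 1))).filter Nat.Prime).card ≤ 2 ^ (i + 2) := by
  set S := (Finset.Ico (2 ^ i) (2 ^ (i + 1))).filter Nat.Prime with hS
  have h1 : (2 ^ i) ^ S.card ≤ ∏ p ∈ S, p := by
    apply Finset.pow_card_le_prod
    intro p hp
    simp [hS] at hp
    exact hp.1.1
  have h2 : ∏ p ∈ S, p ≤ primorial (2 ^ (i + 1)) := by
    unfold primorial
    apply Finset.prod_le_prod_of_subset_of_one_le'
    · intro p hp
      simp [hS] at hp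
      simp
      exact ⟨by omega, hp.2⟩
    · intro p hp _
      simp at hp
      exact hp.2.one_lt.le
  have h3 := primorial_le_four_pow (2 ^ (i + 1))
  have h4 : (4 : ℕ) ^ (2 ^ (i + 1)) = 2 ^ (2 ^ (i + 2)) := by
    rw [show (4 : ℕ) = 2 ^ 2 by norm_num, ← pow_mul]
    congr 1
    ring
  have h5 : 2 ^ (i * S.card) ≤ 2 ^ (2 ^ (i + 2)) := by
    rw [pow_mul, ← h4]
    exact h1.trans (h2.trans h3)
  exact (Nat.pow_le_pow_iff_right (by norm_num)).1 h5

lemma sqrt_half_rpow (i : ℕ) : (2 : ℝ) ^ (-(i : ℝ) / 2) = (2 ^ (-(1 / 2) : ℝ)) ^ i := by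
  rw [← Real.rpow_natCast, ← Real.rpow_mul (by norm_num)]
  congr 1
  ring

lemma half_lt : (2 : ℝ) ^ (-(1 / 2) : ℝ) ≤ 3 / 4 := by
  have h : ((2 : ℝ) ^ (-(1 / 2) : ℝ)) ^ 2 = 1 / 2 := by
    rw [← Real.rpow_natCast, ← Real.rpow_mul (by norm_num)]
    norm_num [Real.rpow_neg_one]
  have h0 : 0 ≤ (2 : ℝ) ^ (-(1 / 2) : ℝ) := by positivity
  nlinarith

lemma prime_sum_aux (j L : ℕ) (hj : 1 ≤ j) :
    ∑ p ∈ (Finset.range (2 ^ L)).filter (fun p => p.Prime ∧ 2 ^ j < p), (p : ℝ) ^ (-(3 / 2) : ℝ)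
      ≤ 16 * ((2 : ℝ) ^ (-(j : ℝ) / 2) / j) := by
  set S := (Finset.range (2 ^ L)).filter (fun p => p.Prime ∧ 2 ^ j < p) with hS
  have hmap : ∀ p ∈ S, Nat.log 2 p ∈ Finset.Ico j L := by
    intro p hp
    simp [hS] at hp
    simp only [Finset.mem_Ico]
    have hp0 : p ≠ 0 := hp.2.1.ne_zero
    exact ⟨(Nat.le_log_iff_pow_le (by norm_num) hp0).2 hp.2.2.le,
      (Nat.log_lt_iff_lt_pow (by norm_num) hp0).2 hp.1⟩
  rw [← Finset.sum_fiberwise_of_maps_to hmap]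
  have hfib : ∀ i ∈ Finset.Ico j L,
      ∑ p ∈ S with Nat.log 2 p = i, (p : ℝ) ^ (-(3 / 2) : ℝ)
        ≤ (4 / j) * (2 ^ (-(1 / 2) : ℝ)) ^ i := by
    intro i hi
    simp only [Finset.mem_Ico] at hi
    have hi1 : 1 ≤ i := hj.trans hi.1
    have hb : ∀ p ∈ S.filter (fun p => Nat.log 2 p = i),
        (p : ℝ) ^ (-(3 / 2) : ℝ) ≤ ((2 : ℝ) ^ i) ^ (-(3 / 2) : ℝ) := by
      intro p hp
      simp [hS] at hp
      apply Real.rpow_le_rpow_of_nonpos (by positivity) _ (by norm_num)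
      have : 2 ^ i ≤ p := (Nat.le_log_iff_pow_le (by norm_num) hp.1.2.1.ne_zero).1 hp.2.ge
      exact_mod_cast this
    have h1 := Finset.sum_le_card_nsmul _ _ _ hb
    have hsub : S.filter (fun p => Nat.log 2 p = i) ⊆
        (Finset.Ico (2 ^ i) (2 ^ (i + 1))).filter Nat.Prime := by
      intro p hp
      simp [hS] at hp
      simp only [Finset.mem_filter, Finset.mem_Ico]
      refine ⟨⟨(Nat.le_log_iff_pow_le (by norm_num) hp.1.2.1.ne_zero).1 hp.2.ge, ?_⟩, hp.1.2.1⟩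
      exact (Nat.log_lt_iff_lt_pow (by norm_num) hp.1.2.1.ne_zero).1 (by omega)
    have hc := Finset.card_le_card hsub
    have hc2 := prime_card_aux i
    set c := (S.filter (fun p => Nat.log 2 p = i)).card
    have hc3 : i * c ≤ 2 ^ (i + 2) := (Nat.mul_le_mul_left i hc).trans hc2
    have hc4 : (j : ℝ) * c ≤ 4 * 2 ^ i := by
      have : j * c ≤ 4 * 2 ^ i := by
        calc j * c ≤ i * c := Nat.mul_le_mul_right c hi.1
          _ ≤ _ := hc3
          _ = _ := by ring
      exact_mod_cast this
    have hj0 : (0 : ℝ) < j := by exact_mod_cast hj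
    refine h1.trans ?_
    rw [nsmul_eq_mul]
    have e : (2 : ℝ) ^ i * ((2 : ℝ) ^ i) ^ (-(3 / 2) : ℝ) = (2 ^ (-(1 / 2) : ℝ)) ^ i := by
      rw [← Real.rpow_natCast, ← Real.rpow_mul (by norm_num), ← Real.rpow_natCast, ← Real.rpow_mul (by norm_num), ← Real.rpow_add (by norm_num)]
      congr 1
      ring
    calc (c : ℝ) * ((2 : ℝ) ^ i) ^ (-(3 / 2) : ℝ)
        ≤ (4 / j * 2 ^ i) * ((2 : ℝ) ^ i) ^ (-(3 / 2) : ℝ) := by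
          gcongr
          rw [div_mul_eq_mul_div, le_div_iff₀ hj0]
          linarith
      _ = _ := by rw [mul_assoc, e]
  refine (Finset.sum_le_sum hfib).trans ?_
  rw [← Finset.mul_sum, sqrt_half_rpow]
  set r : ℝ := 2 ^ (-(1 / 2) : ℝ)
  have hr : r ≤ 3 / 4 := half_lt
  have hr0 : 0 ≤ r := by positivity
  have hg : ∑ i ∈ Finset.Ico j L, r ^ i ≤ r ^ j / (1 - r) :=
    geom_sum_Ico_le_of_lt_one hr0 (by linarith)
  have hg2 : r ^ j / (1 - r) ≤ 4 * r ^ j := by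
    rw [div_le_iff₀ (by linarith)]
    have : 0 ≤ r ^ j := by positivity
    nlinarith
  calc 4 / (j : ℝ) * ∑ i ∈ Finset.Ico j L, r ^ i ≤ 4 / (j : ℝ) * (4 * r ^ j) := by
        gcongr; exact hg.trans hg2
    _ = _ := by ring

lemma not_dvd_qlcm {j q : ℕ} (hq : ¬ q ∣ qlcm j) :
    (∃ p, p.Prime ∧ 2 ^ j < p ∧ p ∣ q) ∨ (∃ n, 2 ^ j < n ^ 3 ∧ n ^ 2 ∣ q) := by
  rw [Nat.dvd_iff_prime_pow_dvd_dvd] at hq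
  push Not at hq
  obtain ⟨p, a, hp, hpa, hn⟩ := hq
  have hbig : 2 ^ j < p ^ a := by
    by_contra h
    push Not at h
    apply hn
    have : p ^ a ∈ Finset.Icc 1 (2 ^ j) := by
      simp only [Finset.mem_Icc]
      exact ⟨Nat.pow_pos hp.pos, h⟩
    exact Finset.dvd_lcm (f := id) this
  rcases Nat.lt_or_ge a 2 with ha | ha
  · left
    interval_cases a
    · simp at hbig
    · exact ⟨p, hp, by simpa using hbig, by simpa using hpa⟩
  · right
    refine ⟨p ^ (a / 2), ?_, ?_⟩
    · refine hbig.trans_le ?_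
      rw [← pow_mul]
      exact Nat.pow_le_pow_right hp.pos (by omega)
    · refine (dvd_trans ?_ hpa)
      rw [← pow_mul]
      exact pow_dvd_pow _ (by omega)

lemma sum_multiples (N D : ℕ) (hD : 1 ≤ D) :
    ∑ q ∈ (Finset.range N).filter (fun q => 1 ≤ q ∧ D ∣ q), (q : ℝ) ^ (-(3 / 2) : ℝ)
      ≤ (D : ℝ) ^ (-(3 / 2) : ℝ) * ∑' n : ℕ, (n : ℝ) ^ (-(3 / 2) : ℝ) := by
  have hs : Summable (fun n : ℕ => (n : ℝ) ^ (-(3 / 2) : ℝ)) :=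
    Real.summable_nat_rpow.2 (by norm_num)
  have : ∑ q ∈ (Finset.range N).filter (fun q => 1 ≤ q ∧ D ∣ q), (q : ℝ) ^ (-(3 / 2) : ℝ)
      = ∑ m ∈ ((Finset.range N).filter (fun q => 1 ≤ q ∧ D ∣ q)).image (fun q => q / D),
        (D : ℝ) ^ (-(3 / 2) : ℝ) * (m : ℝ) ^ (-(3 / 2) : ℝ) := by
    rw [Finset.sum_image]
    · apply Finset.sum_congr rfl
      intro q hq
      simp at hq
      rw [← Real.mul_rpow (by positivity) (by positivity)]
      congr 1
      exact_mod_cast (Nat.mul_div_cancel' hq.2.2).symm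
    · intro a ha b hb h
      simp at ha hb h
      rw [← Nat.mul_div_cancel' ha.2.2, ← Nat.mul_div_cancel' hb.2.2, h]
  rw [this, ← Finset.mul_sum]
  gcongr
  exact hs.sum_le_tsum _ (fun _ _ => by positivity)

lemma square_sum_aux (j N : ℕ) :
    ∑ n ∈ (Finset.range N).filter (fun n => 2 ^ j < n ^ 3), ((n ^ 2 : ℕ) : ℝ) ^ (-(3 / 2) : ℝ)
      ≤ (∑' n : ℕ, (n : ℝ) ^ (-(5 / 4) : ℝ)) * 2 ^ (-(7 / 12 * j) : ℝ) := by
  have hs : Summable (fun n : ℕ => (n : ℝ) ^ (-(5 / 4) : ℝ)) :=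
    Real.summable_nat_rpow.2 (by norm_num)
  have : ∀ n ∈ (Finset.range N).filter (fun n => 2 ^ j < n ^ 3),
      ((n ^ 2 : ℕ) : ℝ) ^ (-(3 / 2) : ℝ) ≤ (n : ℝ) ^ (-(5 / 4) : ℝ) * 2 ^ (-(7 / 12 * j) : ℝ) := by
    intro n hn
    simp at hn
    have hn0 : 0 < n := by
      rcases Nat.eq_zero_or_pos n with h | h
      · simp [h] at hn
      · exact h
    have hn1 : (0 : ℝ) < n := by exact_mod_cast hn0
    have e1 : ((n ^ 2 : ℕ) : ℝ) ^ (-(3 / 2) : ℝ) =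
        (n : ℝ) ^ (-(5 / 4) : ℝ) * (((n : ℝ) ^ 3) ^ (-(7 / 12) : ℝ)) := by
      push_cast
      rw [← Real.rpow_natCast, ← Real.rpow_mul hn1.le, ← Real.rpow_natCast (n : ℝ) 3,
        ← Real.rpow_mul hn1.le, ← Real.rpow_add hn1]
      norm_num
    have e2 : (2 : ℝ) ^ (-(7 / 12 * j) : ℝ) = ((2 : ℝ) ^ j) ^ (-(7 / 12) : ℝ) := by
      rw [← Real.rpow_natCast, ← Real.rpow_mul (by norm_num)]
      congr 1
      ring
    rw [e1, e2]
    refine mul_le_mul_of_nonneg_left ?_ (by positivity)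
    apply Real.rpow_le_rpow_of_nonpos (by positivity) _ (by norm_num)
    exact_mod_cast hn.2.le
  refine (Finset.sum_le_sum this).trans ?_
  rw [← Finset.sum_mul]
  gcongr
  exact hs.sum_le_tsum _ (fun _ _ => by positivity)

lemma decay_cmp (j : ℕ) (hj : 1 ≤ j) (θ : ℝ) (hθ : 7 / 12 ≤ θ) :
    (2 : ℝ) ^ (-(θ * j) : ℝ) ≤ 24 * ((2 : ℝ) ^ (-(j : ℝ) / 2) / j) := by
  have hj0 : (0 : ℝ) < j := by exact_mod_cast hj
  rw [← mul_div_assoc, le_div_iff₀ hj0]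
  have h1 : (j : ℝ) ≤ 24 * 2 ^ ((j : ℝ) / 12) := by
    have h := Real.add_one_le_exp (Real.log 2 * ((j : ℝ) / 12))
    rw [Real.rpow_def_of_pos (by norm_num)]
    have := Real.log_two_gt_d9
    nlinarith
  have h2 : (2 : ℝ) ^ (-(θ * j) : ℝ) ≤ 2 ^ (-(7 / 12 * j) : ℝ) := by
    apply Real.rpow_le_rpow_of_exponent_le (by norm_num)
    nlinarith
  have h3 : (2 : ℝ) ^ (-(j : ℝ) / 2) = 2 ^ (-(7 / 12 * j) : ℝ) * 2 ^ ((j : ℝ) / 12) := by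
    rw [← Real.rpow_add (by norm_num)]
    congr 1
    ring
  rw [h3]
  calc _ ≤ (2 : ℝ) ^ (-(7 / 12 * j) : ℝ) * (24 * (2 : ℝ) ^ ((j : ℝ) / 12)) := by gcongr
    _ = _ := by ring

lemma arith_sum : ∃ C : ℝ, 0 < C ∧ ∀ j L : ℕ, 1 ≤ j →
    ∑ q ∈ (Finset.range (2 ^ L)).filter (fun q => 1 ≤ q),
      (q : ℝ) ^ (-(3 / 2) : ℝ) * (if q ∣ qlcm j then (2 : ℝ) ^ (-(j : ℝ)) else 1)
      ≤ C * ((2 : ℝ) ^ (-(j : ℝ) / 2) / j) := by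
  set Z := ∑' n : ℕ, (n : ℝ) ^ (-(3 / 2) : ℝ) with hZ
  set Y := ∑' n : ℕ, (n : ℝ) ^ (-(5 / 4) : ℝ) with hY
  have hs : Summable (fun n : ℕ => (n : ℝ) ^ (-(3 / 2) : ℝ)) :=
    Real.summable_nat_rpow.2 (by norm_num)
  have hZ0 : 0 ≤ Z := tsum_nonneg (fun _ => by positivity)
  have hY0 : 0 ≤ Y := tsum_nonneg (fun _ => by positivity)
  refine ⟨Z * 24 + 16 * Z + Y * 24 * Z + 1, by positivity, ?_⟩
  intro j L hj
  have hj0 : (0 : ℝ) < j := by exact_mod_cast hj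
  set R := (2 : ℝ) ^ (-(j : ℝ) / 2) / j with hR
  have hR0 : 0 ≤ R := by positivity
  set F := (Finset.range (2 ^ L)).filter (fun q => 1 ≤ q) with hF
  set P := (Finset.range (2 ^ L)).filter (fun p => p.Prime ∧ 2 ^ j < p) with hP
  set Q := (Finset.range (2 ^ L)).filter (fun n => 2 ^ j < n ^ 3) with hQ
  let M : ℕ → Finset ℕ := fun D => (Finset.range (2 ^ L)).filter (fun q => 1 ≤ q ∧ D ∣ q)
  have hsub : F.filter (fun q => ¬ q ∣ qlcm j) ⊆ P.biUnion M ∪ Q.biUnion (fun n => M (n ^ 2)) := by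
    intro q hq
    simp only [hF, Finset.mem_filter, Finset.mem_range] at hq
    simp only [Finset.mem_union, Finset.mem_biUnion, hP, hQ, M, Finset.mem_filter, Finset.mem_range]
    rcases not_dvd_qlcm hq.2 with ⟨p, h1, h2, h3⟩ | ⟨n, h1, h2⟩
    · left
      exact ⟨p, ⟨(Nat.le_of_dvd hq.1.2 h3).trans_lt hq.1.1, h1, h2⟩, hq.1.1, hq.1.2, h3⟩
    · right
      have hn : n ≤ n ^ 2 := Nat.le_self_pow (by norm_num) n
      exact ⟨n, ⟨(hn.trans (Nat.le_of_dvd hq.1.2 h2)).trans_lt hq.1.1, h1⟩, hq.1.1, hq.1.2, h2⟩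
  have hA : ∑ q ∈ F.filter (fun q => ¬ q ∣ qlcm j), (q : ℝ) ^ (-(3 / 2) : ℝ)
      ≤ 16 * R * Z + Y * (24 * R) * Z := by
    refine (Finset.sum_le_sum_of_subset_of_nonneg hsub (fun _ _ _ => by positivity)).trans ?_
    have hu : ∀ A B : Finset ℕ, ∑ q ∈ A ∪ B, (q : ℝ) ^ (-(3 / 2) : ℝ) ≤
        ∑ q ∈ A, (q : ℝ) ^ (-(3 / 2) : ℝ) + ∑ q ∈ B, (q : ℝ) ^ (-(3 / 2) : ℝ) := by
      intro A B
      rw [← Finset.sum_union_inter]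
      have : 0 ≤ ∑ q ∈ A ∩ B, (q : ℝ) ^ (-(3 / 2) : ℝ) := Finset.sum_nonneg (fun _ _ => by positivity)
      linarith
    have hbi : ∀ (A : Finset ℕ) (g : ℕ → Finset ℕ), ∑ q ∈ A.biUnion g, (q : ℝ) ^ (-(3 / 2) : ℝ) ≤
        ∑ a ∈ A, ∑ q ∈ g a, (q : ℝ) ^ (-(3 / 2) : ℝ) := by
      intro A g
      induction A using Finset.induction_on with
      | empty => simp
      | insert a s ha ih =>
        rw [Finset.biUnion_insert, Finset.sum_insert ha]
        exact (hu _ _).trans (by gcongr)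
    refine (hu _ _).trans (add_le_add ?_ ?_)
    · refine (hbi _ _).trans ?_
      calc ∑ a ∈ P, ∑ q ∈ M a, (q : ℝ) ^ (-(3 / 2) : ℝ) ≤ ∑ a ∈ P, (a : ℝ) ^ (-(3 / 2) : ℝ) * Z := by
            apply Finset.sum_le_sum
            intro a ha
            simp [hP] at ha
            exact sum_multiples _ a ha.2.1.one_lt.le
        _ ≤ _ := by
            rw [← Finset.sum_mul]
            gcongr
            exact prime_sum_aux j L hj
    · refine (hbi _ _).trans ?_
      calc ∑ a ∈ Q, ∑ q ∈ M (a ^ 2), (q : ℝ) ^ (-(3 / 2) : ℝ)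
          ≤ ∑ a ∈ Q, ((a ^ 2 : ℕ) : ℝ) ^ (-(3 / 2) : ℝ) * Z := by
            apply Finset.sum_le_sum
            intro a ha
            simp [hQ] at ha
            have : 0 < a := by
              rcases Nat.eq_zero_or_pos a with h | h
              · simp [h] at ha
              · exact h
            exact sum_multiples _ (a ^ 2) (Nat.pow_pos this)
        _ ≤ _ := by
            rw [← Finset.sum_mul]
            gcongr
            refine (square_sum_aux j _).trans ?_
            gcongr
            exact decay_cmp j hj (7 / 12) le_rfl
  rw [← Finset.sum_filter_add_sum_filter_not F (fun q => q ∣ qlcm j)]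
  have hB : ∑ q ∈ F.filter (fun q => q ∣ qlcm j),
      (q : ℝ) ^ (-(3 / 2) : ℝ) * (if q ∣ qlcm j then (2 : ℝ) ^ (-(j : ℝ)) else 1) ≤ Z * (24 * R) := by
    calc _ = (∑ q ∈ F.filter (fun q => q ∣ qlcm j), (q : ℝ) ^ (-(3 / 2) : ℝ)) * 2 ^ (-(j : ℝ)) := by
          rw [Finset.sum_mul]
          apply Finset.sum_congr rfl
          intro q hq
          rw [if_pos (Finset.mem_filter.1 hq).2]
      _ ≤ _ := by
          gcongr
          · exact hs.sum_le_tsum _ (fun _ _ => by positivity)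
          · simpa using decay_cmp j hj 1 (by norm_num)
  have hC : ∑ q ∈ F.filter (fun q => ¬ q ∣ qlcm j),
      (q : ℝ) ^ (-(3 / 2) : ℝ) * (if q ∣ qlcm j then (2 : ℝ) ^ (-(j : ℝ)) else 1)
      = ∑ q ∈ F.filter (fun q => ¬ q ∣ qlcm j), (q : ℝ) ^ (-(3 / 2) : ℝ) := by
    apply Finset.sum_congr rfl
    intro q hq
    rw [if_neg (Finset.mem_filter.1 hq).2, mul_one]
  rw [hC]
  nlinarith
lemma gauss_bound (q : ℕ) [NeZero q] (p : ZMod q) (hp : IsUnit p) (k : ZMod q) :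
    ‖∑ r : ZMod q, (ZMod.stdAddChar (-(r * k)) : ℂ) * ZMod.stdAddChar (p * r ^ 2)‖
      ≤ Real.sqrt (2 * q) := by
  set S := ∑ r : ZMod q, (ZMod.stdAddChar (-(r * k)) : ℂ) * ZMod.stdAddChar (p * r ^ 2) with hS
  apply Real.le_sqrt_of_sq_le
  have h1 : S * (starRingEnd ℂ) S = ∑ h : ZMod q, ∑ s : ZMod q,
      (ZMod.stdAddChar (p * h ^ 2 - h * k) : ℂ) * ZMod.stdAddChar (s * (2 * p * h)) := by
    rw [hS, map_sum, Finset.sum_mul_sum, Finset.sum_comm]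
    conv_rhs => rw [Finset.sum_comm]
    apply Finset.sum_congr rfl
    intro s _
    rw [← Equiv.sum_comp (Equiv.addRight s)]
    apply Finset.sum_congr rfl
    intro h _
    rw [map_mul (starRingEnd ℂ), ← AddChar.map_neg_eq_conj, ← AddChar.map_neg_eq_conj, ← AddChar.map_add_eq_mul,
      ← AddChar.map_add_eq_mul, ← AddChar.map_add_eq_mul, ← AddChar.map_add_eq_mul]
    congr 1
    simp only [Equiv.coe_addRight]
    ring
  have h2 : ‖S‖ ^ 2 = ‖S * (starRingEnd ℂ) S‖ := by
    rw [norm_mul, RCLike.norm_conj, sq]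
  rw [h2, h1]
  have h3 : ∀ h : ZMod q, ‖∑ s : ZMod q,
      (ZMod.stdAddChar (p * h ^ 2 - h * k) : ℂ) * ZMod.stdAddChar (s * (2 * p * h))‖
      ≤ if 2 • h = 0 then (q : ℝ) else 0 := by
    intro h
    rw [← Finset.mul_sum, AddChar.sum_mulShift _ (ZMod.isPrimitive_stdAddChar q), norm_mul]
    have hu : 2 * p * h = 0 ↔ 2 • h = 0 := by
      rw [show 2 * p * h = p * (2 • h) by rw [nsmul_eq_mul]; push_cast; ring]
      exact hp.mul_right_eq_zero
    simp only [hu, AddChar.norm_apply, one_mul, ZMod.card]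
    split_ifs <;> simp
  refine (norm_sum_le _ _).trans ((Finset.sum_le_sum (fun h _ => h3 h)).trans ?_)
  rw [← Finset.sum_filter, Finset.sum_const, nsmul_eq_mul]
  have := IsAddCyclic.card_nsmul_eq_zero_le (α := ZMod q) (n := 2) (by norm_num)
  have h4 : ((Finset.univ.filter (fun h : ZMod q => 2 • h = 0)).card : ℝ) ≤ 2 := by
    exact_mod_cast this
  gcongr

lemma quad_expand (q : ℕ) [NeZero q] (p : ZMod q) (x : ZMod q) :
    (ZMod.stdAddChar (p * x ^ 2) : ℂ) = (q : ℂ)⁻¹ * ∑ l : ZMod q, (ZMod.stdAddChar (l * x) : ℂ) *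
      ∑ r : ZMod q, (ZMod.stdAddChar (-(r * l)) : ℂ) * ZMod.stdAddChar (p * r ^ 2) := by
  have h := congrFun (ZMod.dft.symm_apply_apply (fun r : ZMod q => (ZMod.stdAddChar (p * r ^ 2) : ℂ))) x
  rw [ZMod.invDFT_apply] at h
  simp only [ZMod.dft_apply, smul_eq_mul] at h
  exact h.symm

/-- one dimensional theta term -/
def tTerm (a : ℂ) (x : ℝ) (n : ℤ) : ℂ :=
  Complex.exp (-π * a * n ^ 2 + 2 * π * (-Complex.I * x) * n)

lemma norm_tTerm (a : ℂ) (x : ℝ) (n : ℤ) : ‖tTerm a x n‖ = Real.exp (-(π * a.re) * n ^ 2) := by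
  unfold tTerm
  rw [Complex.norm_exp]
  congr 1
  have : (-π * a * n ^ 2 + 2 * π * (-Complex.I * x) * n : ℂ) =
    ((-(π * n ^ 2) : ℝ) : ℂ) * a + ((-(2 * π * x * n) : ℝ) : ℂ) * Complex.I := by
    push_cast; ring
  rw [this, Complex.add_re, Complex.re_ofReal_mul, Complex.re_ofReal_mul]
  simp
  ring

lemma summable_gauss (c : ℝ) (hc : 0 < c) : Summable (fun n : ℤ => Real.exp (-c * (n : ℝ) ^ 2)) := by
  have h := summable_pow_mul_jacobiTheta₂_term_bound 0 (T := c / π) (by positivity) 0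
  refine h.congr (fun n => ?_)
  simp
  field_simp

lemma shift_ineq (n y : ℝ) (hy0 : 0 ≤ y) (hy1 : y ≤ 1) : n ^ 2 / 2 - 1 ≤ (n + y) ^ 2 := by
  nlinarith [sq_nonneg (n + 2 * y), mul_nonneg hy0 (sub_nonneg.2 hy1)]

lemma summable_gauss_shift (c : ℝ) (hc : 0 < c) (y : ℝ) :
    Summable (fun n : ℤ => Real.exp (-c * ((n : ℝ) + y) ^ 2)) ∧
    ∑' n : ℤ, Real.exp (-c * ((n : ℝ) + y) ^ 2) ≤
      Real.exp c * ∑' n : ℤ, Real.exp (-(c / 2) * (n : ℝ) ^ 2) := by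
  have hf : ∀ n : ℤ, Real.exp (-c * ((n : ℝ) + Int.fract y) ^ 2) ≤
      Real.exp c * Real.exp (-(c / 2) * (n : ℝ) ^ 2) := by
    intro n
    rw [← Real.exp_add]
    apply Real.exp_le_exp.2
    have := shift_ineq n (Int.fract y) (Int.fract_nonneg y) (Int.fract_lt_one y).le
    nlinarith
  have hs := (summable_gauss (c / 2) (by positivity)).mul_left (Real.exp c)
  have hs1 : Summable (fun n : ℤ => Real.exp (-c * ((n : ℝ) + Int.fract y) ^ 2)) :=
    Summable.of_nonneg_of_le (fun _ => (Real.exp_pos _).le) hf hs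
  have he : ∀ n : ℤ, Real.exp (-c * (((Equiv.addRight ⌊y⌋ n : ℤ) : ℝ) + Int.fract y) ^ 2)
      = Real.exp (-c * ((n : ℝ) + y) ^ 2) := by
    intro n
    congr 3
    simp only [Equiv.coe_addRight]
    push_cast
    rw [add_assoc, Int.floor_add_fract]
  have hs2 := (Equiv.addRight ⌊y⌋).summable_iff.2 hs1
  refine ⟨hs2.congr he, ?_⟩
  rw [← tsum_congr he, Equiv.tsum_eq (Equiv.addRight ⌊y⌋)
    (fun n : ℤ => Real.exp (-c * ((n : ℝ) + Int.fract y) ^ 2)), ← tsum_mul_left]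
  exact hs1.tsum_le_tsum hf hs

/-- Gaussian lattice sum -/
def gSum (c y : ℝ) : ℝ := ∑' n : ℤ, Real.exp (-c * ((n : ℝ) + y) ^ 2)

lemma gSum_nonneg (c y : ℝ) : 0 ≤ gSum c y := tsum_nonneg (fun _ => (Real.exp_pos _).le)

lemma gSum_anti {c c' : ℝ} (h0 : 0 < c) (h : c ≤ c') (y : ℝ) : gSum c' y ≤ gSum c y := by
  apply (summable_gauss_shift c' (h0.trans_le h) y).1.tsum_le_tsum _ (summable_gauss_shift c h0 y).1
  intro n
  apply Real.exp_le_exp.2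
  nlinarith [sq_nonneg ((n : ℝ) + y)]

lemma gSum_bound : ∃ K : ℝ, 1 ≤ K ∧ ∀ c y : ℝ, 1 / 4 ≤ c → gSum c y ≤ K := by
  refine ⟨max 1 (Real.exp (1 / 4) * ∑' n : ℤ, Real.exp (-((1 / 4) / 2) * (n : ℝ) ^ 2)), le_max_left _ _, ?_⟩
  intro c y hc
  exact (gSum_anti (by norm_num) hc y).trans
    ((summable_gauss_shift (1 / 4) (by norm_num) y).2.trans (le_max_right _ _))

lemma gSum_far {c y D : ℝ} (hc : 0 < c) (hD : 0 ≤ D) (h : ∀ n : ℤ, D ≤ |(n : ℝ) + y|) :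
    gSum c y ≤ Real.exp (-(c / 2) * D ^ 2) * gSum (c / 2) y := by
  unfold gSum
  rw [← tsum_mul_left]
  apply (summable_gauss_shift c hc y).1.tsum_le_tsum _
    ((summable_gauss_shift (c / 2) (by positivity) y).1.mul_left _)
  intro n
  rw [← Real.exp_add]
  apply Real.exp_le_exp.2
  have : D ^ 2 ≤ ((n : ℝ) + y) ^ 2 := by
    rw [← sq_abs ((n : ℝ) + y)]
    exact pow_le_pow_left₀ hD (h n) 2
  nlinarith

lemma tsum_tTerm_bound (a : ℂ) (ha : 0 < a.re) (x : ℝ) :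
    ‖∑' n : ℤ, tTerm a x n‖ ≤ ‖a‖ ^ (-(1 / 2) : ℝ) * gSum (π * (a.re / ‖a‖ ^ 2)) x := by
  unfold tTerm
  rw [Complex.tsum_exp_neg_quadratic ha (-Complex.I * x)]
  have ha0 : a ≠ 0 := by
    rintro rfl
    simp at ha
  have hn : 0 < ‖a‖ := norm_pos_iff.2 ha0
  have h1 : ‖1 / a ^ (1 / 2 : ℂ)‖ = ‖a‖ ^ (-(1 / 2) : ℝ) := by
    rw [norm_div, norm_one]
    have := Complex.norm_cpow_real a (1 / 2)
    push_cast at this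
    rw [this, Real.rpow_neg hn.le, one_div]
  have h2 : ∀ n : ℤ, ‖Complex.exp (-π / a * (n + Complex.I * (-Complex.I * x)) ^ 2)‖
      = Real.exp (-(π * (a.re / ‖a‖ ^ 2)) * ((n : ℝ) + x) ^ 2) := by
    intro n
    rw [Complex.norm_exp]
    congr 1
    have : (-π / a * (n + Complex.I * (-Complex.I * x)) ^ 2 : ℂ) =
        ((-(π * ((n : ℝ) + x) ^ 2) : ℝ) : ℂ) * a⁻¹ := by
      have hI : Complex.I * (-Complex.I * x) = x := by
        rw [← mul_assoc, mul_neg, Complex.I_mul_I]; simp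
      rw [hI]
      push_cast
      ring
    rw [this, Complex.re_ofReal_mul, Complex.inv_re, Complex.normSq_eq_norm_sq]
    ring
  rw [norm_mul, h1]
  gcongr
  have hs := (summable_gauss_shift (π * (a.re / ‖a‖ ^ 2)) (by positivity) x).1
  refine (norm_tsum_le_tsum_norm ?_).trans ?_
  · exact hs.congr (fun n => (h2 n).symm)
  · rw [tsum_congr h2]; rfl

lemma summable_tTerm (a : ℂ) (ha : 0 < a.re) (x : ℝ) : Summable (fun n => ‖tTerm a x n‖) :=
  (summable_gauss (π * a.re) (by positivity)).congr (fun n => (norm_tTerm a x n).symm)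

lemma sum_gSum (q : ℕ) [NeZero q] (c x : ℝ) (hc : 0 < c) :
    ∑ l : Fin q, gSum c (x + (l : ℕ) / q) = gSum (c / q ^ 2) (q * x) := by
  have hq : (q : ℝ) ≠ 0 := by exact_mod_cast NeZero.ne q
  have hq0 : (0 : ℝ) < q := lt_of_le_of_ne (by positivity) hq.symm
  have hs := (summable_gauss_shift (c / q ^ 2) (by positivity) (q * x)).1
  unfold gSum
  rw [← (Int.divModEquiv q).symm.tsum_eq]
  have hs' := (Int.divModEquiv q).symm.summable_iff.2 hs
  simp only [Function.comp_def] at hs'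
  rw [hs'.tsum_prod, ← Summable.tsum_finsetSum]
  · apply tsum_congr
    intro n
    rw [tsum_fintype]
    apply Finset.sum_congr rfl
    intro l _
    congr 1
    simp [Int.divModEquiv]
    field_simp
    ring
  · intro l _
    exact (summable_gauss_shift c hc _).1

lemma sum_zmod_fin (q : ℕ) [NeZero q] (f : ℕ → ℝ) :
    ∑ l : ZMod q, f l.val = ∑ l : Fin q, f l := by
  obtain ⟨n, rfl⟩ : ∃ n, q = n + 1 := ⟨q - 1, by have := NeZero.pos q; omega⟩
  rfl

lemma tTerm_twist (q : ℕ) [NeZero q] (p : ℤ) (ε τ x : ℝ) (n : ℤ) :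
    tTerm (2 * ε - 2 * Complex.I * ((p / q + τ : ℝ) : ℂ)) x n =
      (ZMod.stdAddChar ((p : ZMod q) * (n : ZMod q) ^ 2) : ℂ) *
        tTerm (2 * ε - 2 * Complex.I * (τ : ℂ)) x n := by
  have : ((p : ZMod q) * (n : ZMod q) ^ 2) = ((p * n ^ 2 : ℤ) : ZMod q) := by push_cast; ring
  rw [this, ZMod.stdAddChar_coe]
  unfold tTerm
  rw [← Complex.exp_add]
  congr 1
  push_cast
  ring

lemma tTerm_shift (q : ℕ) [NeZero q] (l : ZMod q) (a : ℂ) (x : ℝ) (n : ℤ) :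
    (ZMod.stdAddChar (-(l * (n : ZMod q))) : ℂ) * tTerm a x n = tTerm a (x + (l.val : ℝ) / q) n := by
  have : (-(l * (n : ZMod q))) = ((-((l.val : ℤ) * n) : ℤ) : ZMod q) := by
    push_cast
    rw [ZMod.natCast_zmod_val]
  rw [this, ZMod.stdAddChar_coe]
  unfold tTerm
  rw [← Complex.exp_add]
  congr 1
  push_cast
  ring

lemma quad_expand_neg (q : ℕ) [NeZero q] (p : ZMod q) : ∃ G : ZMod q → ℂ,
    (IsUnit p → ∀ l, ‖G l‖ ≤ Real.sqrt (2 * q)) ∧ ∀ x : ZMod q,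
    (ZMod.stdAddChar (p * x ^ 2) : ℂ) =
      ∑ l : ZMod q, (q : ℂ)⁻¹ * G l * (ZMod.stdAddChar (-(l * x)) : ℂ) := by
  refine ⟨fun l => ∑ r : ZMod q, (ZMod.stdAddChar (-(r * (-l))) : ℂ) * ZMod.stdAddChar (p * r ^ 2),
    fun hp l => gauss_bound q p hp (-l), ?_⟩
  intro x
  rw [quad_expand, ← Equiv.sum_comp (Equiv.neg (ZMod q)), Finset.mul_sum]
  apply Finset.sum_congr rfl
  intro l _
  simp only [Equiv.neg_apply, neg_mul]
  ring

lemma weyl_bound (q : ℕ) [NeZero q] (p : ℤ) (hp : IsUnit (p : ZMod q)) (ε τ x : ℝ) (hε : 0 < ε) :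
    ‖∑' n, tTerm (2 * ε - 2 * Complex.I * ((p / q + τ : ℝ) : ℂ)) x n‖ ≤
      (q : ℝ)⁻¹ * Real.sqrt (2 * q) * (2 * Real.sqrt (ε ^ 2 + τ ^ 2)) ^ (-(1 / 2) : ℝ) *
        gSum (π * (ε / (2 * (ε ^ 2 + τ ^ 2))) / q ^ 2) (q * x) := by
  set a : ℂ := 2 * ε - 2 * Complex.I * (τ : ℂ) with ha
  have har : a.re = 2 * ε := by simp [ha]
  have hai : a.im = -(2 * τ) := by simp [ha]
  have hsq : ‖a‖ ^ 2 = 4 * (ε ^ 2 + τ ^ 2) := by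
    rw [← Complex.normSq_eq_norm_sq, Complex.normSq_apply, har, hai]; ring
  have hn : ‖a‖ = 2 * Real.sqrt (ε ^ 2 + τ ^ 2) := by
    rw [← Real.sqrt_sq (norm_nonneg a), hsq, Real.sqrt_mul (by norm_num)]
    congr 1
    rw [show (4 : ℝ) = 2 ^ 2 by norm_num, Real.sqrt_sq (by norm_num)]
  have ha0 : 0 < a.re := by rw [har]; positivity
  have hc : π * (a.re / ‖a‖ ^ 2) = π * (ε / (2 * (ε ^ 2 + τ ^ 2))) := by
    rw [har, hsq]
    congr 1
    have : 0 < ε ^ 2 + τ ^ 2 := by positivity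
    field_simp
    ring
  obtain ⟨G, hG, hexp⟩ := quad_expand_neg q (p : ZMod q)
  have h1 : ∀ n : ℤ, tTerm (2 * ε - 2 * Complex.I * ((p / q + τ : ℝ) : ℂ)) x n =
      ∑ l : ZMod q, (q : ℂ)⁻¹ * G l * tTerm a (x + (l.val : ℝ) / q) n := by
    intro n
    rw [tTerm_twist, hexp, Finset.sum_mul]
    apply Finset.sum_congr rfl
    intro l _
    rw [← tTerm_shift]
    ring
  rw [tsum_congr h1, Summable.tsum_finsetSum]
  swap
  · intro l _
    exact ((summable_tTerm a ha0 _).of_norm).mul_left _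
  have h2 : ∀ l : ZMod q, ‖∑' n, (q : ℂ)⁻¹ * G l * tTerm a (x + (l.val : ℝ) / q) n‖ ≤
      (q : ℝ)⁻¹ * Real.sqrt (2 * q) * (‖a‖ ^ (-(1 / 2) : ℝ) *
        gSum (π * (a.re / ‖a‖ ^ 2)) (x + (l.val : ℝ) / q)) := by
    intro l
    rw [tsum_mul_left, norm_mul, norm_mul, norm_inv, Complex.norm_natCast]
    gcongr
    · exact hG hp l
    · exact tsum_tTerm_bound a ha0 _
  refine (norm_sum_le _ _).trans ((Finset.sum_le_sum (fun l _ => h2 l)).trans ?_)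
  rw [← Finset.mul_sum, ← Finset.mul_sum, sum_zmod_fin q (fun v => gSum (π * (a.re / ‖a‖ ^ 2)) (x + (v : ℝ) / q)),
    sum_gSum q _ x (by rw [hc]; positivity), hc, hn]
  apply le_of_eq
  ring

lemma pi_tsum (d : ℕ) (f : Fin d → ℤ → ℂ) (hf : ∀ i, Summable (fun n => ‖f i n‖)) :
    Summable (fun m : Fin d → ℤ => ‖∏ i, f i (m i)‖) ∧
      ∑' m : Fin d → ℤ, ∏ i, f i (m i) = ∏ i, ∑' n, f i n := by
  induction d with
  | zero =>
    refine ⟨(hasSum_fintype _).summable, ?_⟩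
    rw [tsum_fintype]
    simp
  | succ d ih =>
    obtain ⟨h1, h2⟩ := ih (fun i => f i.succ) (fun i => hf i.succ)
    have hs := (hf 0).mul_norm h1
    have he : ∀ z : ℤ × (Fin d → ℤ), ∏ i, f i ((Fin.consEquiv (fun _ => ℤ)) z i) =
        f 0 z.1 * ∏ i : Fin d, f i.succ (z.2 i) := by
      intro z
      rw [Fin.prod_univ_succ]
      simp [Fin.consEquiv]
    constructor
    · rw [← (Fin.consEquiv (fun _ : Fin (d + 1) => ℤ)).summable_iff]
      refine hs.congr (fun z => ?_)
      simp only [Function.comp_apply]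
      rw [he z]
    · rw [← (Fin.consEquiv (fun _ : Fin (d + 1) => ℤ)).tsum_eq, tsum_congr he, Fin.prod_univ_succ, ← h2]
      exact (tsum_mul_tsum_of_summable_norm (hf 0) h1).symm

lemma sHat_eq {d : ℕ} (ε t : ℝ) (hε : 0 < ε) (α : Fin d → ℝ) :
    sHat ε t α = ∏ i, ∑' n, tTerm (2 * ε - 2 * Complex.I * (t : ℂ)) (α i) n := by
  rw [← (pi_tsum d (fun i => tTerm (2 * ε - 2 * Complex.I * (t : ℂ)) (α i)) (fun i => summable_tTerm _ (by simpa using hε) _)).2]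
  unfold sHat
  apply tsum_congr
  intro m
  unfold sFun tTerm nsq
  rw [← Complex.exp_add, ← Complex.exp_sum]
  congr 1
  push_cast
  rw [Finset.sum_add_distrib, Finset.mul_sum, Finset.mul_sum, Finset.sum_mul]
  congr 1
  · apply Finset.sum_congr rfl
    intro i _
    linear_combination (2 * π * (m i : ℂ) ^ 2 * ε) * Complex.I_mul_I
  · apply Finset.sum_congr rfl
    intro i _
    ring

lemma exp_aux (y : ℝ) (hy : 0 < y) : Real.exp (-(π / 4) * y ^ 2) ≤ 2 / y := by
  have h := Real.add_one_le_exp ((π / 4) * y ^ 2)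
  have hp := Real.pi_gt_three
  rw [neg_mul, Real.exp_neg, inv_le_comm₀ (Real.exp_pos _) (by positivity), inv_div]
  nlinarith [sq_nonneg (y - 1), sq_nonneg y, mul_nonneg (sub_nonneg.2 hp.le) (sq_nonneg y)]

lemma far_coord {d j k : ℕ} {α : Fin d → ℝ} (h : α ∉ OmegaJK d j k) :
    ∃ i, ∀ l : ℤ, (2 : ℝ) ^ ((j : ℤ) - (k : ℤ)) < |α i - (l : ℝ) / (qlcm j : ℝ)| := by
  by_contra hc
  push Not at hc
  choose l hl using hc
  exact h ⟨l, hl⟩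

lemma qlcm_pos (j : ℕ) : 0 < qlcm j := by
  apply Nat.pos_of_ne_zero
  unfold qlcm
  intro h
  rw [Finset.lcm_eq_zero_iff] at h
  simp at h

lemma coord_const (q : ℕ) (hq : 1 ≤ q) (ε V : ℝ) (hε : 0 < ε) (hV : 1 ≤ V) :
    (q : ℝ)⁻¹ * Real.sqrt (2 * q) * (2 * Real.sqrt (ε ^ 2 * V)) ^ (-(1 / 2) : ℝ) =
      (q : ℝ) ^ (-(1 / 2) : ℝ) * ε ^ (-(1 / 2) : ℝ) * V ^ (-(1 / 4) : ℝ) := by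
  have hq0 : (0 : ℝ) < q := by exact_mod_cast hq
  have hV0 : 0 < V := by linarith
  have e1 : Real.sqrt (ε ^ 2 * V) = ε * V ^ (1 / 2 : ℝ) := by
    rw [Real.sqrt_mul (by positivity), Real.sqrt_sq hε.le, Real.sqrt_eq_rpow]
  rw [e1, Real.sqrt_eq_rpow, Real.mul_rpow (by norm_num) hq0.le,
    Real.mul_rpow (by norm_num) (by positivity), Real.mul_rpow hε.le (by positivity),
    ← Real.rpow_mul hV0.le, ← Real.rpow_neg_one (q : ℝ)]
  have e2 : (2 : ℝ) ^ (1 / 2 : ℝ) * 2 ^ (-(1 / 2) : ℝ) = 1 := by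
    rw [← Real.rpow_add (by norm_num)]; norm_num
  have e3 : (q : ℝ) ^ (-1 : ℝ) * (q : ℝ) ^ (1 / 2 : ℝ) = (q : ℝ) ^ (-(1 / 2) : ℝ) := by
    rw [← Real.rpow_add hq0]; norm_num
  rw [show (1 / 2 : ℝ) * -(1 / 2) = -(1 / 4) by norm_num, ← e3]
  linear_combination ((q : ℝ) ^ (-1 : ℝ) * (q : ℝ) ^ (1 / 2 : ℝ) * ε ^ (-(1 / 2) : ℝ) * V ^ (-(1 / 4) : ℝ)) * e2

lemma pow_exp_bound (x : ℝ) (hx : 1 ≤ x) (d : ℕ) (hd : 5 ≤ d) (s : ℝ) (hs : 0 ≤ s) :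
    (x ^ (-s)) ^ d ≤ x ^ (-(5 * s)) := by
  rw [← Real.rpow_natCast, ← Real.rpow_mul (by linarith)]
  apply Real.rpow_le_rpow_of_exponent_le hx
  have : (5 : ℝ) ≤ d := by exact_mod_cast hd
  nlinarith

lemma pointwise_bound (d : ℕ) (hd : 5 ≤ d) : ∃ C : ℝ, 0 < C ∧ ∀ (k j q : ℕ) (p : ℤ) (t : ℝ) (α : Fin d → ℝ)
    (ε : ℝ), ε = ((2 : ℝ) ^ (2 * k))⁻¹ → 1 ≤ q → q ≤ 2 ^ k → IsUnit (p : ZMod q) →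
    |t - p / q| ≤ 1 / (2 ^ k * q) → α ∉ OmegaJK d j k →
    ‖sHat ε t α‖ ≤ C * ((q : ℝ) ^ (-(5 / 2) : ℝ) * (if q ∣ qlcm j then (2 : ℝ) ^ (-(j : ℝ)) else 1)
      * ε ^ (-(d : ℝ) / 2) * (1 + ((t - p / q) / ε) ^ 2) ^ (-(3 / 4) : ℝ)) := by
  obtain ⟨K, hK1, hK⟩ := gSum_bound
  refine ⟨2 * K ^ d, by positivity, ?_⟩
  intro k j q p t α ε hεd hq hqk hp ht hα
  have hε : 0 < ε := by rw [hεd]; positivity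
  have : NeZero q := ⟨by omega⟩
  have hq0 : (0 : ℝ) < q := by exact_mod_cast hq
  have hq1 : (1 : ℝ) ≤ q := by exact_mod_cast hq
  set τ := t - p / q with hτ
  set V := 1 + (τ / ε) ^ 2 with hV
  have hV1 : 1 ≤ V := by rw [hV]; nlinarith [sq_nonneg (τ / ε)]
  have hV0 : 0 < V := by linarith
  have hεV : ε ^ 2 + τ ^ 2 = ε ^ 2 * V := by rw [hV]; field_simp
  set N : ℝ := 2 ^ k with hN
  have hN0 : 0 < N := by positivity
  have hεN : ε = (N ^ 2)⁻¹ := by rw [hεd, hN]; ring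
  have hqN : (q : ℝ) ≤ N := by rw [hN]; exact_mod_cast hqk
  have hτ2 : τ ^ 2 * q ^ 2 ≤ ε := by
    have h1 : |τ| * q ≤ 1 / N := by
      calc |τ| * q ≤ 1 / (N * q) * q := by gcongr
        _ = 1 / N := by field_simp
    have h2 : (|τ| * q) ^ 2 ≤ (1 / N) ^ 2 := pow_le_pow_left₀ (by positivity) h1 2
    rw [mul_pow, sq_abs] at h2
    calc _ ≤ _ := h2
      _ = ε := by rw [hεN]; field_simp
  have hε2 : ε * q ^ 2 ≤ 1 := by
    rw [hεN, inv_mul_le_iff₀ (by positivity), mul_one]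
    gcongr
  have hVq : ε * V * q ^ 2 ≤ 2 := by
    have : ε * (ε * V * q ^ 2) ≤ ε * 2 := by
      calc ε * (ε * V * q ^ 2) = (ε ^ 2 + τ ^ 2) * q ^ 2 := by rw [hεV]; ring
        _ = ε * (ε * q ^ 2) + τ ^ 2 * q ^ 2 := by ring
        _ ≤ ε * 1 + ε := by gcongr
        _ = ε * 2 := by ring
    exact le_of_mul_le_mul_left this hε
  set c := π * (ε / (2 * (ε ^ 2 + τ ^ 2))) / q ^ 2 with hc
  have hc1 : c = π / (2 * (ε * V * q ^ 2)) := by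
    rw [hc, hεV]; field_simp
  have hc2 : 1 / 2 ≤ c := by
    rw [hc1, div_le_div_iff₀ (by norm_num) (by positivity)]
    have := Real.pi_gt_three
    linarith
  set A : ℝ := (q : ℝ) ^ (-(1 / 2) : ℝ) * ε ^ (-(1 / 2) : ℝ) * V ^ (-(1 / 4) : ℝ) with hA
  have hA0 : 0 ≤ A := by positivity
  have hco : ∀ i, ‖∑' n, tTerm (2 * ε - 2 * Complex.I * (t : ℂ)) (α i) n‖ ≤ A * gSum c (q * α i) := by
    intro i
    have h := weyl_bound q p hp ε τ (α i) hε
    rw [show (p / q + τ : ℝ) = t by rw [hτ]; ring, hεV, coord_const q hq ε V hε hV1, ← hεV] at h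
    exact h
  set b : ℝ := if q ∣ qlcm j then (2 : ℝ) ^ (-(j : ℝ)) else 1 with hb
  have hVh : 1 ≤ V ^ (1 / 2 : ℝ) := Real.one_le_rpow hV1 (by norm_num)
  have hprod : ∏ i, gSum c (q * α i) ≤ K ^ d * (2 * V ^ (1 / 2 : ℝ) * b) := by
    by_cases hdv : q ∣ qlcm j
    · obtain ⟨i0, hi0⟩ := far_coord hα
      rw [hb, if_pos hdv]
      have hfar : gSum c (q * α i0) ≤ (2 * V ^ (1 / 2 : ℝ) * 2 ^ (-(j : ℝ))) * K := by
        set D : ℝ := q * (2 : ℝ) ^ ((j : ℤ) - (k : ℤ)) with hD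
        have hDn : ∀ n : ℤ, D ≤ |(n : ℝ) + q * α i0| := by
          intro n
          obtain ⟨e, he⟩ := hdv
          have hl := (hi0 (-(n * e))).le
          have he0 : (e : ℝ) ≠ 0 := by
            have := qlcm_pos j
            rw [he] at this
            exact_mod_cast (Nat.pos_of_mul_pos_left this).ne'
          have : (n : ℝ) + q * α i0 = q * (α i0 - ((-(n * e) : ℤ) : ℝ) / (qlcm j : ℝ)) := by
            rw [he]
            push_cast
            field_simp
            ring
          rw [this, abs_mul, abs_of_pos hq0, hD]
          gcongr
        have h1 := gSum_far (c := c) (by linarith) (by positivity) hDn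
        have h2 := hK (c / 2) (q * α i0) (by linarith)
        refine h1.trans ?_
        refine mul_le_mul ?_ h2 (gSum_nonneg _ _) (by positivity)
        set y : ℝ := 2 ^ j / V ^ (1 / 2 : ℝ) with hy
        have hVs : (V ^ (1 / 2 : ℝ)) ^ 2 = V := by
          rw [← Real.rpow_natCast, ← Real.rpow_mul hV0.le]; norm_num
        have hex : -(c / 2) * D ^ 2 = -(π / 4) * y ^ 2 := by
          rw [hc1, hD, hy, div_pow, hVs, zpow_sub₀ (by norm_num), zpow_natCast, zpow_natCast, ← hN, hεN]
          field_simp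
          ring
        rw [hex]
        refine (exp_aux y (by positivity)).trans (le_of_eq ?_)
        rw [hy, Real.rpow_neg (by norm_num), Real.rpow_natCast]
        field_simp
      rw [← Finset.mul_prod_erase _ _ (Finset.mem_univ i0)]
      have h3 : ∏ i ∈ Finset.univ.erase i0, gSum c (q * α i) ≤ K ^ (d - 1) := by
        have := Finset.prod_le_prod (s := Finset.univ.erase i0) (f := fun i => gSum c (q * α i)) (g := fun _ => K)
          (fun i _ => gSum_nonneg _ _) (fun i _ => hK c _ (by linarith))
        simpa using this
      calc _ ≤ ((2 * V ^ (1 / 2 : ℝ) * 2 ^ (-(j : ℝ))) * K) * K ^ (d - 1) := by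
            gcongr
            exact Finset.prod_nonneg (fun i _ => gSum_nonneg _ _)
        _ = (2 * V ^ (1 / 2 : ℝ) * 2 ^ (-(j : ℝ))) * (K ^ (d - 1) * K) := by ring
        _ = _ := by rw [← pow_succ, show d - 1 + 1 = d by omega]; ring
    · rw [hb, if_neg hdv]
      have h3 := Finset.prod_le_prod (s := Finset.univ) (f := fun i => gSum c (q * α i)) (g := fun _ => K)
          (fun i _ => gSum_nonneg _ _) (fun i _ => hK c _ (by linarith))
      simp only [Finset.prod_const, Finset.card_univ, Fintype.card_fin] at h3
      refine h3.trans (le_mul_of_one_le_right (by positivity) (by linarith))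
  rw [sHat_eq ε t hε, norm_prod]
  have hAd : A ^ d ≤ (q : ℝ) ^ (-(5 / 2) : ℝ) * ε ^ (-(d : ℝ) / 2) * V ^ (-(5 / 4) : ℝ) := by
    rw [hA, mul_pow, mul_pow]
    have e1 := pow_exp_bound q hq1 d hd (1 / 2) (by norm_num)
    have e2 := pow_exp_bound V hV1 d hd (1 / 4) (by norm_num)
    rw [show -(5 * (1 / 2) : ℝ) = -(5 / 2) by norm_num] at e1
    rw [show -(5 * (1 / 4) : ℝ) = -(5 / 4) by norm_num] at e2
    have e3 : (ε ^ (-(1 / 2) : ℝ)) ^ d = ε ^ (-(d : ℝ) / 2) := by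
      rw [← Real.rpow_natCast, ← Real.rpow_mul hε.le]
      congr 1
      ring
    rw [e3]
    gcongr
  have hb0 : 0 ≤ b := by rw [hb]; split_ifs <;> positivity
  calc _ ≤ ∏ i, (A * gSum c (q * α i)) :=
        Finset.prod_le_prod (fun _ _ => norm_nonneg _) (fun i _ => hco i)
    _ = A ^ d * ∏ i, gSum c (q * α i) := by
        rw [Finset.prod_mul_distrib]; simp
    _ ≤ ((q : ℝ) ^ (-(5 / 2) : ℝ) * ε ^ (-(d : ℝ) / 2) * V ^ (-(5 / 4) : ℝ)) *
          (K ^ d * (2 * V ^ (1 / 2 : ℝ) * b)) := by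
        gcongr
        exact Finset.prod_nonneg (fun i _ => gSum_nonneg _ _)
    _ = 2 * K ^ d * ((q : ℝ) ^ (-(5 / 2) : ℝ) * b * ε ^ (-(d : ℝ) / 2) *
          (V ^ (-(5 / 4) : ℝ) * V ^ (1 / 2 : ℝ))) := by ring
    _ = _ := by
        rw [← Real.rpow_add hV0]
        norm_num

/-- The bracket weight. -/
def brk (u : ℝ) : ℝ := (1 + u ^ 2) ^ (-(3 / 4) : ℝ)

lemma brk_nonneg (u : ℝ) : 0 ≤ brk u := by unfold brk; positivity

lemma brk_integrable : MeasureTheory.Integrable brk := by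
  have h := integrable_rpow_neg_one_add_norm_sq (E := ℝ) (μ := MeasureTheory.volume) (r := 3 / 2) (by simp; norm_num)
  refine h.congr (Filter.Eventually.of_forall (fun u => ?_))
  simp only [brk, Real.norm_eq_abs, sq_abs]
  norm_num

lemma brk_scaled (ε x : ℝ) (hε : 0 < ε) :
    MeasureTheory.Integrable (fun t => brk ((t - x) / ε)) ∧
      ∫ t, brk ((t - x) / ε) = ε * ∫ u, brk u := by
  constructor
  · exact (brk_integrable.comp_div hε.ne').comp_sub_right x
  · rw [MeasureTheory.integral_sub_right_eq_self (fun t => brk (t / ε)) x,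
      MeasureTheory.Measure.integral_comp_div, abs_of_pos hε, smul_eq_mul]

lemma dirichlet_aux (k : ℕ) (t : ℝ) (h0 : 0 ≤ t) (h1 : t ≤ 1) :
    ∃ q p : ℕ, 1 ≤ q ∧ q ≤ 2 ^ k ∧ p ≤ q ∧ IsUnit ((p : ℤ) : ZMod q) ∧
      |t - ((p : ℤ) : ℝ) / q| ≤ 1 / (2 ^ k * q) := by
  obtain ⟨r, hr, hd⟩ := Real.exists_rat_abs_sub_le_and_den_le t (n := 2 ^ k) (by positivity)
  have hq : 0 < r.den := r.den_pos
  have hq0 : (0 : ℝ) < r.den := by exact_mod_cast hq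
  have hrc : (r : ℝ) = (r.num : ℝ) / r.den := by
    exact_mod_cast (Rat.cast_def (K := ℝ) r)
  have hN : (1 : ℝ) ≤ 2 ^ k := one_le_pow₀ (by norm_num)
  push_cast at hr
  rw [hrc] at hr
  have hlt : |t * r.den - r.num| < 1 := by
    have : t * r.den - r.num = (t - r.num / r.den) * r.den := by field_simp
    rw [this, abs_mul, abs_of_pos hq0]
    calc _ ≤ 1 / ((2 ^ k + 1) * (r.den : ℝ)) * r.den := by gcongr
      _ = 1 / (2 ^ k + 1) := by field_simp
      _ < 1 := by rw [div_lt_one (by positivity)]; linarith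
  rw [abs_lt] at hlt
  have hn0 : 0 ≤ r.num := by
    have : (-1 : ℝ) < r.num := by nlinarith
    have : (-1 : ℤ) < r.num := by exact_mod_cast this
    omega
  have hn1 : r.num ≤ r.den := by
    have : (r.num : ℝ) < r.den + 1 := by nlinarith
    have : r.num < (r.den : ℤ) + 1 := by exact_mod_cast this
    omega
  have hnn : ((r.num.natAbs : ℕ) : ℤ) = r.num := Int.natAbs_of_nonneg hn0
  refine ⟨r.den, r.num.natAbs, hq, hd, by omega, ?_, ?_⟩
  · have := (ZMod.isUnit_iff_coprime r.num.natAbs r.den).2 r.reduced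
    rw [Int.cast_natCast]
    exact this
  · rw [hnn]
    refine hr.trans ?_
    gcongr
    linarith

/-- **Estimate (StBound)**: for `d ≥ 5`, `1 ≤ j ≤ log₂ k - 2` and `ε = 2^{-2k}`,
`∫₀¹ sup_{α ∈ Ω_{j,k}^c} |ŝ_t(α)| dt ≤ C_d ε^{-(d-2)/2} 2^{-j/2} j⁻¹`. -/
theorem main_integral_estimate (d : ℕ) (hd : 5 ≤ d) :
    ∃ C : ℝ, 0 < C ∧ ∀ (k j : ℕ), 1 ≤ j → (j : ℝ) ≤ Real.logb 2 (k : ℝ) - 2 →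
      (∫ t in (0 : ℝ)..1,
          ⨆ (α : Fin d → ℝ) (_ : α ∉ OmegaJK d j k),
            ‖sHat (d := d) (((2 : ℝ) ^ (2 * k))⁻¹) t α‖)
        ≤ C * (((2 : ℝ) ^ (2 * k))⁻¹) ^ (-((d : ℝ) - 2) / 2) *
            (2 : ℝ) ^ (-(j : ℝ) / 2) / (j : ℝ) := by
  obtain ⟨C1, hC1, hpt⟩ := pointwise_bound d hd
  obtain ⟨C2, hC2, har⟩ := arith_sum
  set I := ∫ u, brk u with hI
  have hI0 : 0 ≤ I := MeasureTheory.integral_nonneg brk_nonneg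
  refine ⟨2 * C1 * I * C2 + 1, by positivity, ?_⟩
  intro k j hj _
  have hj0 : (0 : ℝ) < j := by exact_mod_cast hj
  set ε : ℝ := ((2 : ℝ) ^ (2 * k))⁻¹ with hεd
  have hε : 0 < ε := by positivity
  set F := (Finset.range (2 ^ (k + 1))).filter (fun q => 1 ≤ q) with hF
  let b : ℕ → ℝ := fun q => if q ∣ qlcm j then (2 : ℝ) ^ (-(j : ℝ)) else 1
  have hb : ∀ q, 0 ≤ b q := by
    intro q
    simp only [b]
    split_ifs <;> positivity
  let w : ℕ → ℝ := fun q => C1 * ((q : ℝ) ^ (-(5 / 2) : ℝ) * b q * ε ^ (-(d : ℝ) / 2))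
  have hw : ∀ q, 0 ≤ w q := by
    intro q
    have := hb q
    simp only [w]
    positivity
  let g : ℝ → ℝ := fun t => ∑ q ∈ F, ∑ p ∈ Finset.range (q + 1), w q * brk ((t - (p : ℝ) / q) / ε)
  have hterm : ∀ (t : ℝ) (q p : ℕ), 0 ≤ w q * brk ((t - (p : ℝ) / q) / ε) :=
    fun t q p => mul_nonneg (hw q) (brk_nonneg _)
  have hg0 : ∀ t, 0 ≤ g t := fun t =>
    Finset.sum_nonneg (fun q _ => Finset.sum_nonneg (fun p _ => hterm t q p))
  have hint : ∀ q ∈ F, ∀ p ∈ Finset.range (q + 1),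
      MeasureTheory.Integrable (fun t => w q * brk ((t - (p : ℝ) / q) / ε)) :=
    fun q _ p _ => (brk_scaled ε _ hε).1.const_mul _
  have hgi : MeasureTheory.Integrable g :=
    MeasureTheory.integrable_finsetSum _ (fun q hq => MeasureTheory.integrable_finsetSum _ (hint q hq))
  have hgI : ∫ t, g t = ∑ q ∈ F, ∑ p ∈ Finset.range (q + 1), w q * (ε * I) := by
    simp only [g]
    rw [MeasureTheory.integral_finsetSum _
      (fun q hq => MeasureTheory.integrable_finsetSum _ (hint q hq))]
    apply Finset.sum_congr rfl
    intro q hq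
    rw [MeasureTheory.integral_finsetSum _ (hint q hq)]
    apply Finset.sum_congr rfl
    intro p _
    rw [MeasureTheory.integral_const_mul, (brk_scaled ε _ hε).2]
  have hle : ∀ t ∈ Set.Ioc (0 : ℝ) 1, (⨆ (α : Fin d → ℝ) (_ : α ∉ OmegaJK d j k), ‖sHat ε t α‖) ≤ g t := by
    intro t ht
    obtain ⟨q, p, h1, h2, h3, h4, h5⟩ := dirichlet_aux k t ht.1.le ht.2
    refine Real.iSup_le (fun α => Real.iSup_le (fun hα => ?_) (hg0 t)) (hg0 t)
    have h := hpt k j q p t α ε rfl h1 h2 h4 h5 hα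
    have hqF : q ∈ F := by
      simp only [hF, Finset.mem_filter, Finset.mem_range]
      refine ⟨?_, h1⟩
      have : 2 ^ k < 2 ^ (k + 1) := Nat.pow_lt_pow_right (by norm_num) (by omega)
      omega
    calc ‖sHat ε t α‖ ≤ w q * brk ((t - (p : ℝ) / q) / ε) := by
          refine h.trans (le_of_eq ?_)
          simp only [w, b, brk]
          push_cast
          ring
      _ ≤ ∑ p ∈ Finset.range (q + 1), w q * brk ((t - (p : ℝ) / q) / ε) :=
          Finset.single_le_sum (f := fun p : ℕ => w q * brk ((t - (p : ℝ) / q) / ε))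
            (fun p _ => hterm t q p) (Finset.mem_range.2 (by omega))
      _ ≤ g t := Finset.single_le_sum
            (f := fun q : ℕ => ∑ p ∈ Finset.range (q + 1), w q * brk ((t - (p : ℝ) / q) / ε))
            (fun q _ => Finset.sum_nonneg (fun p _ => hterm t q p)) hqF
  rw [intervalIntegral.integral_of_le zero_le_one]
  have hstep : (∫ t in Set.Ioc (0 : ℝ) 1, ⨆ (α : Fin d → ℝ) (_ : α ∉ OmegaJK d j k), ‖sHat ε t α‖)
      ≤ ∫ t in Set.Ioc (0 : ℝ) 1, g t := by
    apply MeasureTheory.integral_mono_of_nonneg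
    · exact Filter.Eventually.of_forall
        (fun t => Real.iSup_nonneg (fun α => Real.iSup_nonneg (fun _ => norm_nonneg _)))
    · exact hgi.integrableOn
    · exact (MeasureTheory.ae_restrict_iff' measurableSet_Ioc).2 (Filter.Eventually.of_forall hle)
  have hstep2 : ∫ t in Set.Ioc (0 : ℝ) 1, g t ≤ ∫ t, g t :=
    MeasureTheory.setIntegral_le_integral hgi (Filter.Eventually.of_forall hg0)
  have hεp : ε ^ (-(d : ℝ) / 2) * ε = ε ^ (-((d : ℝ) - 2) / 2) := by
    nth_rewrite 2 [← Real.rpow_one ε]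
    rw [← Real.rpow_add hε]
    congr 1
    ring
  have hsum : ∑ q ∈ F, ∑ p ∈ Finset.range (q + 1), w q * (ε * I) ≤
      (2 * C1 * I * ε ^ (-((d : ℝ) - 2) / 2)) * ∑ q ∈ F, (q : ℝ) ^ (-(3 / 2) : ℝ) * b q := by
    rw [Finset.mul_sum]
    apply Finset.sum_le_sum
    intro q hq
    simp only [hF, Finset.mem_filter] at hq
    have hq1 : (1 : ℝ) ≤ q := by exact_mod_cast hq.2
    have hq0 : (0 : ℝ) < q := by linarith
    rw [Finset.sum_const, Finset.card_range, nsmul_eq_mul, ← hεp]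
    have e : (q : ℝ) * (q : ℝ) ^ (-(5 / 2) : ℝ) = (q : ℝ) ^ (-(3 / 2) : ℝ) := by
      nth_rewrite 1 [← Real.rpow_one (q : ℝ)]
      rw [← Real.rpow_add hq0]
      norm_num
    rw [← e]
    push_cast
    have hwq := hw q
    calc ((q : ℝ) + 1) * (w q * (ε * I)) ≤ (2 * q) * (w q * (ε * I)) := by
          gcongr
          linarith
      _ = _ := by simp only [w]; ring
  have hfin := har j (k + 1) hj
  have hE : 0 ≤ ε ^ (-((d : ℝ) - 2) / 2) := by positivity
  have hR0 : 0 ≤ (2 : ℝ) ^ (-(j : ℝ) / 2) / j := by positivity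
  refine hstep.trans (hstep2.trans ?_)
  rw [hgI]
  refine hsum.trans ?_
  calc _ ≤ (2 * C1 * I * ε ^ (-((d : ℝ) - 2) / 2)) * (C2 * ((2 : ℝ) ^ (-(j : ℝ) / 2) / j)) := by
        gcongr
    _ = (2 * C1 * I * C2) * (ε ^ (-((d : ℝ) - 2) / 2) * ((2 : ℝ) ^ (-(j : ℝ) / 2) / j)) := by ring
    _ ≤ (2 * C1 * I * C2 + 1) * (ε ^ (-((d : ℝ) - 2) / 2) * ((2 : ℝ) ^ (-(j : ℝ) / 2) / j)) := by
        gcongr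
        linarith
    _ = _ := by ring
end
end

section
/- Let $d\ge 5$, $k\in\mathbb{N}$, $1\le j\le\log_2(k)-2$, and set $\varepsilon=2^{-2k}$. With $s_t(m)=e^{2\pi i|m|^2(t+i\varepsilon)}$, $\widehat{s_t}(\alpha)=\sum_{m\in\mathbb{Z}^d}s_t(m)e^{-2\pi i m\cdot\alpha}$, and $V_{a,q}$ the Farey arcs at level $2^k$, there is a constant $C_d$ such that $\sum_{1\le q\le 2^k,\ q\mid q_j}\ \sum_{0<a\le q,\ \gcd(a,q)=1}\int_{V_{a,q}}\sup_{\alpha\in\Omega_{j,k}^c}|\widehat{s_t}(\alpha)|\,dt\ \le\ C_d\,\varepsilon^{-(d-2)/2}\,2^{-j(d-2)/4}$. -/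
open scoped BigOperators Real ENNReal

noncomputable section

/-- The set `H` of reduced fractions `a/q` with `1 ≤ q ≤ 2^k`, `0 < a ≤ q`. -/
def FareyH (k : ℕ) : Set ℝ :=
  {x | ∃ a q : ℕ, 1 ≤ q ∧ q ≤ 2 ^ k ∧ 0 < a ∧ a ≤ q ∧ Nat.Coprime a q ∧ x = (a : ℝ) / q}

/-- The Farey arc `V_{a,q}` at level `2^k`. -/
def FareyArc (k a q : ℕ) : Set ℝ :=
  {t | t ∈ Set.Icc (0 : ℝ) 1 ∧ |t - (a : ℝ) / q| = ⨅ r : FareyH k, |t - (r : ℝ)|}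

lemma maj_lcm_step (n : ℕ) (hn : 0 < n) :
    Nat.lcmUpto (2 * n) ≤ Nat.lcmUpto n * 4 ^ n := by
  have hC : Nat.centralBinom n ≤ 4 ^ n := by
    have := Nat.choose_le_two_pow (2*n) n
    rw [pow_mul] at this
    simpa [Nat.centralBinom] using this
  have hdvd : Nat.lcmUpto (2 * n) ∣ Nat.lcmUpto n * Nat.centralBinom n := by
    rw [← Nat.factorization_prime_le_iff_dvd (Nat.lcmUpto_ne_zero _)
      (mul_ne_zero (Nat.lcmUpto_ne_zero _) (Nat.centralBinom_ne_zero n))]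
    intro p hp
    rw [Nat.factorization_mul (Nat.lcmUpto_ne_zero _) (Nat.centralBinom_ne_zero n)]
    rw [Finsupp.add_apply, Nat.factorization_lcmUpto _ hp, Nat.factorization_lcmUpto _ hp]
    set e := Nat.log p (2*n) with he
    by_cases h : e ≤ Nat.log p n
    · omega
    · have h1 : n < p ^ e := Nat.lt_pow_of_log_lt hp.one_lt (by omega)
      have h2 : p ^ e ≤ 2 * n := Nat.pow_log_le_self p (by omega)
      have h3 : e ≤ Nat.log p n + 1 := by
        rw [← Nat.log_mul_base hp.one_lt (by omega)]
        exact Nat.log_mono_right (by have := hp.two_le; nlinarith)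
      have h4 : 1 ≤ (Nat.centralBinom n).factorization p := by
        rw [Nat.centralBinom, Nat.factorization_choose (b := e+1) hp (by omega) (by omega)]
        rw [Nat.one_le_iff_ne_zero, ← Nat.pos_iff_ne_zero, Finset.card_pos]
        refine ⟨e, ?_⟩
        simp only [Finset.mem_filter, Finset.mem_Ico]
        refine ⟨⟨by omega, by omega⟩, ?_⟩
        rw [show 2 * n - n = n by omega, Nat.mod_eq_of_lt h1]; omega
      omega
  refine (Nat.le_of_dvd ?_ hdvd).trans (Nat.mul_le_mul_left _ hC)
  exact Nat.mul_pos (Nat.lcmUpto_pos _) (Nat.centralBinom_pos n)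

lemma maj_lcm_bound (j : ℕ) : Nat.lcmUpto (2 ^ j) * 4 ≤ 4 ^ (2 ^ j) := by
  induction j with
  | zero => simp [Nat.lcmUpto]
  | succ j ih =>
    have := maj_lcm_step (2^j) (by positivity)
    rw [pow_succ', show 4 ^ (2 * 2^j) = 4^(2^j) * 4 ^ (2^j) by rw [← pow_add]; ring_nf]
    calc _ ≤ (Nat.lcmUpto (2 ^ j) * 4) * 4 ^ (2^j) := by nlinarith
      _ ≤ _ := Nat.mul_le_mul_right _ ih


lemma maj_farey_meas (k a q : ℕ) : MeasurableSet (FareyArc k a q) := by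
  have : FareyArc k a q = Set.Icc (0:ℝ) 1 ∩ {t | |t - (a : ℝ) / q| = Metric.infDist t (FareyH k)} := by
    ext t
    simp only [FareyArc, Set.mem_setOf_eq, Set.mem_inter_iff, Metric.infDist_eq_iInf, Real.dist_eq]
  rw [this]
  apply measurableSet_Icc.inter
  apply (isClosed_eq _ _).measurableSet
  · fun_prop
  · exact Metric.continuous_infDist_pt _

lemma maj_farey_le {k a q : ℕ} {t r : ℝ} (ht : t ∈ FareyArc k a q) (hr : r ∈ FareyH k) :
    |t - (a : ℝ) / q| ≤ |t - r| := by
  rw [ht.2]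
  exact ciInf_le ⟨0, by rintro _ ⟨x, rfl⟩; positivity⟩ (⟨r, hr⟩ : FareyH k)

lemma maj_farey {k a q : ℕ} {t : ℝ} (hq : 1 ≤ q) (hqk : 2 * q < 2 ^ k) (ha : 0 < a) (hc : Nat.Coprime a q)
    (ht : t ∈ FareyArc k a q) : |t - (a : ℝ) / q| * (q * 2 ^ k) ≤ 1 := by
  have hN : 0 < 2 ^ k := by positivity
  have hNr : (0:ℝ) < 2 ^ k := by positivity
  have hq0 : (0:ℝ) < q := by exact_mod_cast hq
  have hqk' : (2:ℝ) * q < 2 ^ k := by exact_mod_cast hqk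
  obtain ⟨⟨ht0, ht1⟩, -⟩ := id ht
  obtain ⟨x, hx, hxd⟩ := Real.exists_rat_abs_sub_le_and_den_le t hN
  have hr : (0:ℝ) < x.den := by exact_mod_cast x.pos
  have hr1 : (1:ℝ) ≤ x.den := by exact_mod_cast x.pos
  have hxe : (x : ℝ) = x.num / x.den := by exact_mod_cast (Rat.num_div_den x).symm
  rw [le_div_iff₀ (by positivity)] at hx
  push_cast at hx
  have hx2 : |t * x.den - x.num| * (2 ^ k + 1) ≤ 1 := by
    have : t * x.den - x.num = (t - x) * x.den := by rw [hxe]; field_simp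
    rw [this, abs_mul, abs_of_pos hr]; linarith
  have hx3 : |t * x.den - x.num| < 1 := by
    by_contra! h
    nlinarith
  rw [abs_lt] at hx3
  have hnum0 : 0 ≤ x.num := by
    by_contra! h
    have : (x.num : ℝ) ≤ -1 := by exact_mod_cast (by omega : x.num ≤ -1)
    nlinarith
  have hnum1 : x.num ≤ x.den := by
    by_contra! h
    have : (x.den : ℝ) + 1 ≤ x.num := by exact_mod_cast h
    nlinarith
  rcases hnum0.eq_or_lt with h0 | h0
  · -- x = 0
    exfalso
    have hx0 : x = 0 := Rat.zero_of_num_zero h0.symm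
    subst hx0
    simp at hx
    rw [abs_of_nonneg ht0] at hx
    have h1 := maj_farey_le ht (r := 1 / 2 ^ k) ⟨1, 2^k, Nat.one_le_two_pow, le_rfl, one_pos, Nat.one_le_two_pow, by simp, by simp⟩
    have h2 : t ≤ 1 / 2 ^ k := by rw [le_div_iff₀ hNr]; nlinarith
    rw [abs_of_nonpos (sub_nonpos.2 h2)] at h1
    have h3 : (a:ℝ)/q ≤ 1 / 2^k := by
      have := neg_abs_le (t - (a:ℝ)/q); linarith
    have h4 : 1 / (q:ℝ) ≤ a / q := by
      gcongr; exact_mod_cast ha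
    have h5 := h4.trans h3
    rw [div_le_div_iff₀ hq0 hNr] at h5
    linarith
  · have hmem : (x : ℝ) ∈ FareyH k := by
      refine ⟨x.num.toNat, x.den, x.pos, hxd, by omega, by omega, ?_, ?_⟩
      · have := x.reduced
        rwa [show x.num.toNat = x.num.natAbs by omega]
      · rw [hxe]; congr 1
        exact_mod_cast (Int.toNat_of_nonneg hnum0).symm
    have h1 := maj_farey_le ht hmem
    by_cases hEq : (x : ℝ) = a / q
    · rw [hEq] at hx
      have hE2 : x = (a : ℤ) / (q : ℤ) := by
        have : (x : ℝ) = (((a : ℤ) / (q : ℤ) : ℚ) : ℝ) := by rw [hEq]; push_cast; rfl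
        exact_mod_cast this
      have hden : (x.den : ℤ) = q := by
        rw [hE2]
        exact Rat.den_div_eq_of_coprime (by exact_mod_cast hq) (by simpa using hc)
      have hden' : (x.den : ℝ) = q := by exact_mod_cast hden
      rw [hden'] at hx
      refine le_trans ?_ hx
      exact mul_le_mul_of_nonneg_left (by nlinarith) (abs_nonneg _)
    · exfalso
      have h2 : (1:ℝ) ≤ |(x.num : ℝ) * q - a * x.den| := by
        have : (x.num * q - a * x.den : ℤ) ≠ 0 := by
          intro h
          apply hEq
          rw [hxe, div_eq_div_iff hr.ne' hq0.ne']
          have : (x.num * q : ℤ) = a * x.den := by omega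
          exact_mod_cast this
        have := Int.one_le_abs this
        have h' : (1:ℝ) ≤ ((|x.num * q - a * x.den| : ℤ) : ℝ) := by exact_mod_cast this
        rw [Int.cast_abs] at h'
        push_cast at h'
        exact h'
      have h3 : (x.num * q - a * x.den : ℝ) = ((t - a / q) - (t - x)) * (q * x.den) := by
        rw [hxe]; field_simp; ring
      rw [h3, abs_mul, abs_of_pos (by positivity : (0:ℝ) < q * x.den)] at h2
      have h4 := abs_sub (t - (a:ℝ)/q) (t - x)
      have h5 : (1:ℝ) ≤ 2 * |t - x| * (q * x.den) := by
        refine h2.trans ?_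
        gcongr; linarith
      have h6 : (0:ℝ) ≤ |t - x| * x.den := by positivity
      nlinarith

lemma maj_card_two (q : ℕ) [NeZero q] :
    (Finset.univ.filter (fun h : ZMod q => 2 * h = 0)).card ≤ 2 := by
  have hinj : Set.InjOn (fun h : ZMod q => h.val) (Finset.univ.filter (fun h : ZMod q => 2 * h = 0)) :=
    fun x _ y _ h => ZMod.val_injective q h
  rw [← Finset.card_image_of_injOn hinj]
  refine (Finset.card_le_card (t := {0, q/2}) ?_).trans Finset.card_le_two
  intro v hv
  simp only [Finset.mem_image, Finset.mem_filter, Finset.mem_univ, true_and] at hv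
  obtain ⟨h, h2, rfl⟩ := hv
  have hlt := ZMod.val_lt h
  have h3 : ((2 * h.val : ℕ) : ZMod q) = 0 := by
    push_cast; rw [ZMod.natCast_zmod_val]; exact h2
  rw [ZMod.natCast_eq_zero_iff] at h3
  obtain ⟨c, hc⟩ := h3
  have : c < 2 := by
    by_contra! h
    nlinarith
  simp only [Finset.mem_insert, Finset.mem_singleton]
  interval_cases c <;> omega

lemma maj_gauss (q : ℕ) [NeZero q] (a l : ZMod q) (ha : IsUnit a) :
    ‖∑ x : ZMod q, ZMod.stdAddChar (a * x ^ 2 + l * x)‖ ^ 2 ≤ 2 * q := by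
  set ψ : AddChar (ZMod q) ℂ := ZMod.stdAddChar with hψ
  set G := ∑ x : ZMod q, ψ (a * x ^ 2 + l * x) with hG
  have h1 : G * (starRingEnd ℂ) G = ∑ h : ZMod q, ψ (a * h ^ 2 + l * h) * (if 2 * h = 0 then (q:ℂ) else 0) := by
    have e1 : G * (starRingEnd ℂ) G = ∑ s : ZMod q, ∑ h : ZMod q, ψ (a * h ^ 2 + l * h) * ψ (s * (2 * a * h)) := by
      rw [hG, map_sum, Finset.sum_mul_sum, Finset.sum_comm]
      refine Finset.sum_congr rfl fun s _ => ?_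
      rw [← Equiv.sum_comp (Equiv.addRight s)]
      refine Finset.sum_congr rfl fun h _ => ?_
      rw [← AddChar.map_neg_eq_conj, ← AddChar.map_add_eq_mul, ← AddChar.map_add_eq_mul]
      congr 1
      simp only [Equiv.coe_addRight]
      ring
    rw [e1, Finset.sum_comm]
    refine Finset.sum_congr rfl fun h _ => ?_
    rw [← Finset.mul_sum, AddChar.sum_mulShift _ (ZMod.isPrimitive_stdAddChar q)]
    have : 2 * a * h = 0 ↔ 2 * h = 0 := by
      rw [show 2 * a * h = a * (2 * h) by ring, ha.mul_right_eq_zero]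
    simp [this, ZMod.card]
  have h2 : (‖G‖ ^ 2 : ℝ) = ‖G * (starRingEnd ℂ) G‖ := by
    rw [norm_mul, RCLike.norm_conj, sq]
  rw [h2, h1]
  refine (norm_sum_le _ _).trans ?_
  have h3 : ∀ h : ZMod q, ‖ψ (a * h ^ 2 + l * h) * (if 2 * h = 0 then (q:ℂ) else 0)‖ = if 2 * h = 0 then (q:ℝ) else 0 := by
    intro h
    rw [norm_mul, AddChar.norm_apply]
    split_ifs <;> simp
  simp_rw [h3]
  rw [← Finset.sum_filter, Finset.sum_const, nsmul_eq_mul]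
  gcongr
  exact_mod_cast maj_card_two q

/-- one-dimensional theta summand -/
def majTerm (t ε α : ℝ) (n : ℤ) : ℂ :=
  jacobiTheta₂_term n (-(α : ℂ)) (2 * ((t : ℂ) + Complex.I * ε))

lemma maj_gauss_fin (q : ℕ) [NeZero q] (a : ℕ) (l : ℤ) (ha : Nat.Coprime a q) :
    ‖∑ r : Fin q, Complex.exp (2 * π * Complex.I * (a * (r:ℕ) ^ 2 + l * (r:ℕ)) / q)‖ ≤ √(2 * q) := by
  apply Real.le_sqrt_of_sq_le
  have hu : IsUnit ((a : ℕ) : ZMod q) := (ZMod.isUnit_iff_coprime a q).2 ha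
  refine le_trans (le_of_eq ?_) (maj_gauss q a l hu)
  congr 2
  refine Fintype.sum_bijective (fun r : Fin q => ((r : ℕ) : ZMod q)) ?_ _ _ fun r => ?_
  · rw [Fintype.bijective_iff_injective_and_card]
    refine ⟨fun x y hxy => ?_, by simp [ZMod.card]⟩
    have := congrArg ZMod.val hxy
    simp only [ZMod.val_natCast_of_lt x.2, ZMod.val_natCast_of_lt y.2] at this
    exact Fin.ext this
  · have : ((a : ZMod q) * ((r : ℕ) : ZMod q) ^ 2 + (l : ZMod q) * ((r : ℕ) : ZMod q)) =
      (((a : ℤ) * ((r:ℕ):ℤ)^2 + l * ((r:ℕ):ℤ) : ℤ) : ZMod q) := by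
      push_cast
      rfl
    rw [this, ZMod.stdAddChar_coe]
    push_cast
    rfl

lemma maj_term_split (q : ℕ) [NeZero q] (a : ℕ) (τ ε α : ℝ) (w : ℂ) (hw : w = τ + Complex.I * ε) (m : ℤ) (r : Fin q) :
    majTerm (a / q + τ) ε α (m * q + (r : ℕ)) =
      Complex.exp (2 * π * Complex.I * (a * (r:ℕ) ^ 2) / q) * Complex.exp (2 * π * Complex.I * ((r:ℕ)^2 * w - (r:ℕ) * α)) *
      jacobiTheta₂_term m (2 * q * (r:ℕ) * w - q * α) (2 * q ^ 2 * w) := by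
  have hq : (q:ℂ) ≠ 0 := by exact_mod_cast NeZero.ne q
  unfold majTerm jacobiTheta₂_term
  rw [← Complex.exp_add, ← Complex.exp_add, Complex.exp_eq_exp_iff_exists_int]
  refine ⟨a * m * (m * q + 2 * (r:ℕ)), ?_⟩
  rw [hw]
  push_cast
  field_simp
  ring

lemma maj_theta_eq (q : ℕ) [NeZero q] (a : ℕ) (τ ε α : ℝ) (hε : 0 < ε) (w : ℂ) (hw : w = τ + Complex.I * ε) :
    ∑' n, majTerm (a / q + τ) ε α n = 1 / (-Complex.I * (2 * q ^ 2 * w)) ^ (1 / 2 : ℂ) *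
      ∑' l : ℤ, (∑ r : Fin q, Complex.exp (2 * π * Complex.I * (a * (r:ℕ) ^ 2 + l * (r:ℕ)) / q)) *
        Complex.exp (-π * Complex.I * (α + l / q) ^ 2 / (2 * w)) := by
  have hq : (q:ℂ) ≠ 0 := by exact_mod_cast NeZero.ne q
  have hq0 : (0:ℝ) < q := by exact_mod_cast NeZero.pos q
  have hwim : w.im = ε := by rw [hw]; simp
  have hw0 : w ≠ 0 := by intro h; rw [h] at hwim; simp at hwim; linarith
  have him : 0 < (2 * q ^ 2 * w : ℂ).im := by
    have : (2 * q ^ 2 * w : ℂ) = ((2 * q ^ 2 : ℝ) : ℂ) * w := by push_cast; ring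
    rw [this, Complex.im_ofReal_mul, hwim]; positivity
  have him2 : 0 < (-1 / (2 * q ^ 2 * w) : ℂ).im := by
    rw [neg_div, Complex.neg_im, one_div, Complex.inv_im, neg_div, neg_neg]
    refine div_pos him (Complex.normSq_pos.2 ?_)
    intro h; rw [h] at him; simp at him
  have hsum : Summable (majTerm (a / q + τ) ε α) := by
    unfold majTerm
    rw [summable_jacobiTheta₂_term_iff]
    simp [hε]
  rw [← (Int.divModEquiv q).symm.tsum_eq, ← (Equiv.prodComm (Fin q) ℤ).tsum_eq]
  rw [Summable.tsum_prod]
  swap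
  · exact (Equiv.summable_iff (Equiv.prodComm (Fin q) ℤ)).2 ((Equiv.summable_iff (Int.divModEquiv q).symm).2 hsum)
  rw [tsum_fintype]
  simp only [Equiv.prodComm_apply, Prod.swap_prod_mk, Int.divModEquiv_symm_apply]
  have e1 : ∀ r : Fin q, ∑' m : ℤ, majTerm (a / q + τ) ε α (m * q + (r : ℕ)) =
      1 / (-Complex.I * (2 * q ^ 2 * w)) ^ (1 / 2 : ℂ) * ∑' l : ℤ,
        Complex.exp (2 * π * Complex.I * (a * (r:ℕ) ^ 2 + l * (r:ℕ)) / q) * Complex.exp (-π * Complex.I * (α + l / q) ^ 2 / (2 * w)) := by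
    intro r
    simp_rw [maj_term_split q a τ ε α w hw]
    rw [tsum_mul_left]
    change _ * jacobiTheta₂ _ _ = _
    rw [jacobiTheta₂_functional_equation, jacobiTheta₂, ← tsum_mul_left, ← tsum_mul_left, ← tsum_mul_left]
    refine tsum_congr fun l => ?_
    rw [show ∀ x y z A B : ℂ, x * y * (z * A * B) = z * (x * y * A * B) by intros; ring]
    congr 1
    unfold jacobiTheta₂_term
    rw [← Complex.exp_add, ← Complex.exp_add, ← Complex.exp_add, ← Complex.exp_add]
    congr 1
    field_simp
    ring
  rw [Finset.sum_congr rfl fun r _ => e1 r, ← Finset.mul_sum]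
  congr 1
  simp_rw [Finset.sum_mul]
  rw [Summable.tsum_finsetSum]
  intro r _
  have hs := (summable_jacobiTheta₂_term_iff ((2 * q * (r:ℕ) * w - q * α) / (2 * q ^ 2 * w)) (-1 / (2 * q ^ 2 * w))).2 him2
  refine (hs.mul_left (Complex.exp (2 * π * Complex.I * (a * (r:ℕ) ^ 2) / q) * Complex.exp (-π * Complex.I * α ^ 2 / (2 * w)))).congr fun l => ?_
  unfold jacobiTheta₂_term
  rw [← Complex.exp_add, ← Complex.exp_add, ← Complex.exp_add]
  congr 1
  field_simp
  ring

lemma maj_gaussian_summable (c y : ℝ) (hc : 0 < c) : Summable fun l : ℤ => Real.exp (-c * (y + l) ^ 2) := by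
  have h := (summable_jacobiTheta₂_term_iff (Complex.I * ((c * y / π : ℝ) : ℂ)) (Complex.I * ((c / π : ℝ):ℂ))).2 (by simp; positivity)
  rw [← summable_norm_iff] at h
  refine (h.mul_left (Real.exp (-c * y ^ 2))).congr fun l => ?_
  rw [norm_jacobiTheta₂_term, ← Real.exp_add]
  congr 1
  simp
  field_simp
  ring

/-- The uniform Gaussian constant. -/
def majK : ℝ := Real.exp (1/4) * ∑' l : ℤ, Real.exp (-(1/8) * (0 + (l:ℝ)) ^ 2)

lemma majK_pos : 0 < majK := by
  unfold majK
  have := (maj_gaussian_summable (1/8) 0 (by norm_num)).tsum_pos (fun _ => (Real.exp_pos _).le) 0 (Real.exp_pos _)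
  positivity

lemma maj_gaussian_bound (c y : ℝ) (hc : 1 / 4 ≤ c) : ∑' l : ℤ, Real.exp (-c * (y + l) ^ 2) ≤ majK := by
  have h0 : ∑' l : ℤ, Real.exp (-c * (y + l) ^ 2) = ∑' l : ℤ, Real.exp (-c * (Int.fract y + l) ^ 2) := by
    rw [← (Equiv.addRight (-⌊y⌋)).tsum_eq]
    refine tsum_congr fun l => ?_
    congr 3
    have := Int.self_sub_floor y
    simp only [Equiv.coe_addRight]
    push_cast
    linarith
  rw [h0, majK, ← tsum_mul_left]
  refine Summable.tsum_le_tsum ?_ (maj_gaussian_summable _ _ (by linarith)) ((maj_gaussian_summable (1/8) 0 (by norm_num)).mul_left _)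
  intro l
  rw [← Real.exp_add, Real.exp_le_exp]
  have h1 := Int.fract_nonneg y
  have h2 := (Int.fract_lt_one y).le
  set f := Int.fract y
  have h3 : (l:ℝ)^2 ≤ 2 * (f + l)^2 + 2 := by nlinarith [sq_nonneg (2 * f + l)]
  nlinarith [sq_nonneg (f + l)]

lemma maj_theta_bound (q : ℕ) [NeZero q] (a : ℕ) (ha : Nat.Coprime a q) (τ ε α δ : ℝ) (hε : 0 < ε)
    (hA : (q:ℝ) ^ 2 * (ε ^ 2 + τ ^ 2) ≤ 2 * ε) (hδ : 0 ≤ δ) (hα : ∀ l : ℤ, δ ≤ |α + l / q|) :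
    ‖∑' n, majTerm (a / q + τ) ε α n‖ ≤
      majK * (1 / √(q * √(ε ^ 2 + τ ^ 2))) * Real.exp (-(π / 4 * δ ^ 2 * ε / (ε ^ 2 + τ ^ 2))) := by
  have hq0 : (0:ℝ) < q := by exact_mod_cast NeZero.pos q
  have hX : 0 < ε ^ 2 + τ ^ 2 := by positivity
  set X := ε ^ 2 + τ ^ 2 with hXdef
  set w : ℂ := τ + Complex.I * ε with hw
  have hns : Complex.normSq w = X := by
    rw [hw, Complex.normSq_apply]; simp; ring
  have hnw : ‖w‖ = √X := by rw [Complex.norm_def, hns]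
  have hsX : 0 < √X := Real.sqrt_pos.2 hX
  rw [maj_theta_eq q a τ ε α hε w hw, norm_mul]
  have hP : ‖1 / (-Complex.I * (2 * q ^ 2 * w)) ^ (1 / 2 : ℂ)‖ = 1 / √(2 * q ^ 2 * √X) := by
    rw [norm_div, norm_one, show (1 / 2 : ℂ) = ((1 / 2 : ℝ) : ℂ) by norm_num, Complex.norm_cpow_real, ← Real.sqrt_eq_rpow]
    simp [hnw]
  set A := π / 2 * ε / X with hAdef
  have hE : ∀ l : ℤ, ‖Complex.exp (-π * Complex.I * (α + l / q) ^ 2 / (2 * w))‖ = Real.exp (-A * (α + l / q) ^ 2) := by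
    intro l
    rw [Complex.norm_exp]
    congr 1
    have : (-π * Complex.I * (α + l / q) ^ 2 / (2 * w) : ℂ) = ((-π * (α + l / q) ^ 2 / 2 : ℝ) : ℂ) * (Complex.I * w⁻¹) := by
      push_cast
      field_simp
    rw [this, Complex.re_ofReal_mul]
    have : (Complex.I * w⁻¹).re = ε / X := by
      rw [Complex.I_mul_re, Complex.inv_im, hns, hw]
      simp [neg_div]
    rw [this, hAdef]; ring
  have hAq : 1 / 4 ≤ A / (2 * q ^ 2) := by
    rw [hAdef, le_div_iff₀ (by positivity), le_div_iff₀ hX]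
    nlinarith [Real.pi_gt_three]
  have hA0 : 0 < A := by positivity
  have hterm : ∀ l : ℤ, ‖(∑ r : Fin q, Complex.exp (2 * π * Complex.I * (a * (r:ℕ) ^ 2 + l * (r:ℕ)) / q)) *
        Complex.exp (-π * Complex.I * (α + l / q) ^ 2 / (2 * w))‖ ≤
        √(2 * q) * Real.exp (-(A / 2 * δ ^ 2)) * Real.exp (-(A / (2 * q ^ 2)) * (q * α + l) ^ 2) := by
    intro l
    rw [norm_mul, hE, mul_assoc (√(2 * (q:ℝ))), ← Real.exp_add]
    refine mul_le_mul (maj_gauss_fin q a l ha) ?_ (Real.exp_pos _).le (by positivity)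
    rw [Real.exp_le_exp]
    have h1 : δ ^ 2 ≤ (α + l / q) ^ 2 := by rw [← sq_abs (α + l / q)]; gcongr; exact hα l
    have h2 : -(A / (2 * q ^ 2)) * (q * α + l) ^ 2 = - (A / 2) * (α + l / q) ^ 2 := by
      field_simp
    rw [h2]
    nlinarith
  have hS := (maj_gaussian_summable (A / (2 * q ^ 2)) (q * α) (by linarith)).mul_left (√(2 * q) * Real.exp (-(A / 2 * δ ^ 2)))
  have hmain := tsum_of_norm_bounded hS.hasSum hterm
  rw [tsum_mul_left] at hmain
  have hfin := hmain.trans (mul_le_mul_of_nonneg_left (maj_gaussian_bound _ (q * α) hAq) (by positivity))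
  rw [hP]
  refine (mul_le_mul_of_nonneg_left hfin (by positivity)).trans (le_of_eq ?_)
  have e1 : √(2 * q ^ 2 * √X) = √(2 * q) * √(q * √X) := by
    rw [← Real.sqrt_mul (by positivity)]; congr 1; ring
  have e2 : -(A / 2 * δ ^ 2) = -(π / 4 * δ ^ 2 * ε / X) := by rw [hAdef]; ring
  rw [e1, e2]
  have : √(2 * (q:ℝ)) ≠ 0 := by positivity
  have : √((q:ℝ) * √X) ≠ 0 := by positivity
  field_simp

lemma maj_tsum_prod : ∀ (d : ℕ) (f : Fin d → ℤ → ℂ), (∀ i, Summable fun n => ‖f i n‖) →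
    (Summable fun m : Fin d → ℤ => ‖∏ i, f i (m i)‖) ∧
      ∑' m : Fin d → ℤ, ∏ i, f i (m i) = ∏ i, ∑' n, f i n := by
  intro d
  induction d with
  | zero =>
    intro f _
    refine ⟨Summable.of_finite, ?_⟩
    rw [tsum_fintype]
    simp
  | succ d ih =>
    intro f hf
    obtain ⟨h1, h2⟩ := ih (fun i => f i.succ) (fun i => hf i.succ)
    have hp := (hf 0).mul_norm h1
    have key : ∀ p : ℤ × (Fin d → ℤ), ∏ i, f i ((Fin.consEquiv (fun _ => ℤ)) p i) = f 0 p.1 * ∏ i : Fin d, f i.succ (p.2 i) := by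
      intro p
      rw [Fin.prod_univ_succ]
      simp [Fin.consEquiv]
    constructor
    · rw [← (Fin.consEquiv (fun _ => ℤ)).summable_iff]
      refine hp.congr fun p => ?_
      simp only [Function.comp]
      rw [key]
    · rw [← (Fin.consEquiv (fun _ => ℤ)).tsum_eq]
      simp_rw [key]
      rw [Fin.prod_univ_succ, ← h2, tsum_mul_tsum_of_summable_norm (hf 0) h1]

lemma maj_sHat {d : ℕ} (ε t : ℝ) (hε : 0 < ε) (α : Fin d → ℝ) :
    sHat ε t α = ∏ i, ∑' n, majTerm t ε (α i) n := by
  rw [← (maj_tsum_prod d (fun i => majTerm t ε (α i)) ?_).2]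
  · unfold sHat
    refine tsum_congr fun m => ?_
    unfold sFun majTerm jacobiTheta₂_term nsq
    rw [← Complex.exp_add, ← Complex.exp_sum]
    congr 1
    push_cast
    simp only [Finset.mul_sum, Finset.sum_mul, ← Finset.sum_add_distrib]
    refine Finset.sum_congr rfl fun i _ => ?_
    ring
  · intro i
    rw [summable_norm_iff]
    unfold majTerm
    rw [summable_jacobiTheta₂_term_iff]
    simp [hε]

lemma maj_sHat_bound {d : ℕ} (q : ℕ) [NeZero q] (a : ℕ) (ha : Nat.Coprime a q) (τ ε : ℝ) (hε : 0 < ε)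
    (hA : (q:ℝ) ^ 2 * (ε ^ 2 + τ ^ 2) ≤ 2 * ε) (j k : ℕ) (hq : q ∣ qlcm j) (α : Fin d → ℝ)
    (hα : α ∉ OmegaJK d j k) :
    ‖sHat ε (a / q + τ) α‖ ≤
      (majK * (1 / √(q * √(ε ^ 2 + τ ^ 2)))) ^ d *
        Real.exp (-(π / 4 * ((2 : ℝ) ^ ((j : ℤ) - (k : ℤ))) ^ 2 * ε / (ε ^ 2 + τ ^ 2))) := by
  have hq0 : (0:ℝ) < q := by exact_mod_cast NeZero.pos q
  have hi : ∃ i, ∀ l : ℤ, (2 : ℝ) ^ ((j : ℤ) - (k : ℤ)) < |α i - (l : ℝ) / (qlcm j : ℝ)| := by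
    by_contra! h
    choose l hl using h
    exact hα ⟨l, hl⟩
  obtain ⟨i0, hi0⟩ := hi
  have hQ : qlcm j ≠ 0 := Nat.lcmUpto_ne_zero _
  obtain ⟨c, hc⟩ := hq
  have hc0 : (c:ℝ) ≠ 0 := by rintro h; apply hQ; rw [hc]; simp at h; simp [h]
  have hi1 : ∀ l : ℤ, (2 : ℝ) ^ ((j : ℤ) - (k : ℤ)) ≤ |α i0 + l / q| := by
    intro l
    refine (hi0 (-l * c)).le.trans (le_of_eq ?_)
    rw [hc]; push_cast; congr 1
    field_simp
    ring
  rw [maj_sHat _ _ hε, norm_prod]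
  set B := majK * (1 / √(q * √(ε ^ 2 + τ ^ 2))) with hB
  have hB0 : 0 ≤ B := by have := majK_pos; positivity
  set E := Real.exp (-(π / 4 * ((2 : ℝ) ^ ((j : ℤ) - (k : ℤ))) ^ 2 * ε / (ε ^ 2 + τ ^ 2))) with hE
  calc ∏ i, ‖∑' n, majTerm (a / q + τ) ε (α i) n‖ ≤ ∏ i, (B * if i = i0 then E else 1) := by
        refine Finset.prod_le_prod (fun _ _ => norm_nonneg _) fun i _ => ?_
        split_ifs with h
        · rw [h]
          exact maj_theta_bound q a ha τ ε _ _ hε hA (by positivity) hi1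
        · have := maj_theta_bound q a ha τ ε (α i) 0 hε hA le_rfl (fun _ => abs_nonneg _)
          simpa [hB] using this
    _ = B ^ d * E := by
        rw [Finset.prod_mul_distrib, Finset.prod_const, Finset.prod_ite_eq']
        simp

lemma maj_exp_bound (d : ℕ) (p Y : ℝ) (hp : 0 ≤ p) (hpd : p ≤ d) (hY : 0 < Y) :
    Real.exp (-(π / 4 * Y)) ≤ (Real.exp (1/2) * 2 ^ d * d.factorial) * Y ^ (-p) := by
  have h1 : Y ^ p ≤ (1 + Y) ^ d := by
    calc Y ^ p ≤ (1 + Y) ^ p := by gcongr; linarith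
      _ ≤ (1 + Y) ^ (d : ℝ) := Real.rpow_le_rpow_of_exponent_le (by linarith) hpd
      _ = _ := Real.rpow_natCast _ _
  have h2 := Real.pow_div_factorial_le_exp (x := (1 + Y) / 2) (by positivity) d
  rw [div_pow, div_div, div_le_iff₀ (by positivity)] at h2
  have h3 : Real.exp ((1 + Y) / 2) = Real.exp (1/2) * Real.exp (Y / 2) := by
    rw [← Real.exp_add]; congr 1; ring
  rw [Real.rpow_neg hY.le, ← div_eq_mul_inv, le_div_iff₀ (by positivity)]
  have h4 : Real.exp (-(π / 4 * Y)) ≤ Real.exp (-(Y/2)) := by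
    rw [Real.exp_le_exp]; nlinarith [Real.pi_gt_three]
  calc _ ≤ Real.exp (-(Y/2)) * (Real.exp (1/2) * Real.exp (Y / 2) * (2 ^ d * d.factorial)) := by
        rw [← h3]
        exact mul_le_mul h4 (h1.trans h2) (by positivity) (by positivity)
    _ = (Real.exp (-(Y/2)) * Real.exp (Y/2)) * (Real.exp (1/2) * 2 ^ d * d.factorial) := by ring
    _ = _ := by rw [← Real.exp_add]; simp

lemma maj_scalar (d : ℕ) (hd : 5 ≤ d) (j : ℕ) (x : ℝ) (hx : 1 ≤ x) :
    x ^ (-(d:ℝ) / 4) * Real.exp (-(π / 4 * (4 ^ j / x))) ≤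
      (Real.exp (1/2) * 2 ^ d * d.factorial) * (2 : ℝ) ^ (-(j : ℝ) * ((d : ℝ) - 2) / 4) * x ^ (-(7 / 4 : ℝ) / 2) := by
  have hd' : (5:ℝ) ≤ d := by exact_mod_cast hd
  have hx0 : 0 < x := by linarith
  have h1 := maj_exp_bound d (((d:ℝ) - 2) / 8) (4 ^ j / x) (by linarith) (by linarith) (by positivity)
  have h2 : ((4:ℝ) ^ j / x) ^ (-(((d:ℝ) - 2) / 8)) = (2 : ℝ) ^ (-(j : ℝ) * ((d : ℝ) - 2) / 4) * x ^ (((d:ℝ) - 2) / 8) := by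
    rw [Real.div_rpow (by positivity) hx0.le, Real.rpow_neg hx0.le, div_inv_eq_mul]
    congr 1
    rw [show (4:ℝ) ^ j = (2:ℝ) ^ (2 * (j:ℝ)) by rw [Real.rpow_mul (by norm_num)]; norm_num, ← Real.rpow_mul (by norm_num)]
    congr 1; ring
  rw [h2] at h1
  calc _ ≤ x ^ (-(d:ℝ) / 4) * ((Real.exp (1/2) * 2 ^ d * d.factorial) * ((2 : ℝ) ^ (-(j : ℝ) * ((d : ℝ) - 2) / 4) * x ^ (((d:ℝ) - 2) / 8))) := by
        gcongr
    _ = (Real.exp (1/2) * 2 ^ d * d.factorial) * (2 : ℝ) ^ (-(j : ℝ) * ((d : ℝ) - 2) / 4) * (x ^ (-(d:ℝ) / 4) * x ^ (((d:ℝ) - 2) / 8)) := by ring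
    _ ≤ _ := by
        rw [← Real.rpow_add hx0]
        have hd5 : (5:ℝ) ≤ d := by exact_mod_cast hd
        refine mul_le_mul_of_nonneg_left (Real.rpow_le_rpow_of_exponent_le hx ?_) (by positivity)
        linarith

lemma maj_ptwise (d : ℕ) (hd : 5 ≤ d) (q : ℕ) [NeZero q] (a : ℕ) (ha : Nat.Coprime a q) (τ : ℝ) (j k : ℕ)
    (hτ : |τ| * (q * 2 ^ k) ≤ 1) (hqk : q ≤ 2 ^ k) (hq : q ∣ qlcm j) (α : Fin d → ℝ)
    (hα : α ∉ OmegaJK d j k) :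
    ‖sHat (((2 : ℝ) ^ (2 * k))⁻¹) (a / q + τ) α‖ ≤
      (majK ^ d * (Real.exp (1/2) * 2 ^ d * d.factorial)) * (q:ℝ) ^ (-(d:ℝ)/2) *
       (((2 : ℝ) ^ (2 * k))⁻¹) ^ (-(d:ℝ)/2) * (2 : ℝ) ^ (-(j : ℝ) * ((d : ℝ) - 2) / 4) *
        (1 + ‖τ / ((2 : ℝ) ^ (2 * k))⁻¹‖ ^ 2) ^ (-(7 / 4 : ℝ) / 2) := by
  have hq0 : (0:ℝ) < q := by exact_mod_cast NeZero.pos q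
  set ε : ℝ := ((2 : ℝ) ^ (2 * k))⁻¹ with hεdef
  have hε : 0 < ε := by positivity
  set N : ℝ := 2 ^ k with hN
  have hN0 : 0 < N := by positivity
  have hεN : ε = (N ^ 2)⁻¹ := by rw [hεdef, hN, ← pow_mul, mul_comm k 2]
  have hqN : (q:ℝ) ≤ N := by rw [hN]; exact_mod_cast hqk
  have hεN1 : ε * N ^ 2 = 1 := by rw [hεN]; field_simp
  have hA : (q:ℝ) ^ 2 * (ε ^ 2 + τ ^ 2) ≤ 2 * ε := by
    have h1 : (q:ℝ)^2 * ε ≤ 1 := by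
      calc (q:ℝ)^2 * ε ≤ N ^ 2 * ε := by gcongr
        _ = 1 := by linarith
    have h2 : τ ^ 2 * (q ^ 2 * N ^ 2) ≤ 1 := by
      have : (|τ| * (q * N)) ^ 2 ≤ 1 := pow_le_one₀ (by positivity) hτ
      rw [mul_pow, sq_abs, mul_pow] at this; exact this
    have h3 : (q:ℝ)^2 * τ ^ 2 ≤ ε := by
      rw [hεN, ← one_div, le_div_iff₀ (by positivity)]; linarith
    nlinarith
  refine (maj_sHat_bound q a ha τ ε hε hA j k hq α hα).trans ?_
  set x := 1 + ‖τ / ε‖ ^ 2 with hx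
  have hx1 : 1 ≤ x := by rw [hx]; nlinarith [sq_nonneg ‖τ / ε‖]
  have hx0 : 0 < x := by linarith
  have hX : ε ^ 2 + τ ^ 2 = ε ^ 2 * x := by
    rw [hx, Real.norm_eq_abs, sq_abs]; field_simp
  have hexp : π / 4 * ((2 : ℝ) ^ ((j : ℤ) - (k : ℤ))) ^ 2 * ε / (ε ^ 2 + τ ^ 2) = π / 4 * (4 ^ j / x) := by
    rw [hX, zpow_sub₀ (by norm_num), zpow_natCast, zpow_natCast, ← hN, div_pow, ← pow_mul, mul_comm j 2, pow_mul]
    norm_num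
    field_simp
    rw [mul_comm, hεN1]
  have hbase : (1 / √(q * √(ε ^ 2 + τ ^ 2))) ^ d = (q:ℝ) ^ (-(d:ℝ)/2) * ε ^ (-(d:ℝ)/2) * x ^ (-(d:ℝ) / 4) := by
    rw [hX, Real.sqrt_mul (sq_nonneg ε), Real.sqrt_sq hε.le, ← mul_assoc, one_div, Real.sqrt_eq_rpow, Real.sqrt_eq_rpow,
      Real.mul_rpow (by positivity) (by positivity), Real.mul_rpow (by positivity) (by positivity), ← Real.rpow_mul hx0.le, inv_pow, mul_pow, mul_pow,
      ← Real.rpow_mul_natCast hq0.le, ← Real.rpow_mul_natCast hε.le, ← Real.rpow_mul_natCast hx0.le, mul_inv, mul_inv,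
      ← Real.rpow_neg hq0.le, ← Real.rpow_neg hε.le, ← Real.rpow_neg hx0.le]
    ring_nf
  rw [mul_pow, hbase, hexp]
  have hs := maj_scalar d hd j x hx1
  have hK := majK_pos
  calc _ = (majK ^ d * (q:ℝ) ^ (-(d:ℝ)/2) * ε ^ (-(d:ℝ)/2)) * (x ^ (-(d:ℝ) / 4) * Real.exp (-(π / 4 * (4 ^ j / x)))) := by ring
    _ ≤ (majK ^ d * (q:ℝ) ^ (-(d:ℝ)/2) * ε ^ (-(d:ℝ)/2)) * _ := mul_le_mul_of_nonneg_left hs (by positivity)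
    _ = _ := by ring

lemma maj_integral (c ε : ℝ) (hε : 0 < ε) :
    MeasureTheory.Integrable (fun t : ℝ => (1 + ‖(t - c) / ε‖ ^ 2) ^ (-(7 / 4 : ℝ) / 2)) ∧
    ∫ t : ℝ, (1 + ‖(t - c) / ε‖ ^ 2) ^ (-(7 / 4 : ℝ) / 2) =
      ε * ∫ u : ℝ, (1 + ‖u‖ ^ 2) ^ (-(7 / 4 : ℝ) / 2) := by
  have h0 : MeasureTheory.Integrable (fun u : ℝ => (1 + ‖u‖ ^ 2) ^ (-(7 / 4 : ℝ) / 2)) :=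
    integrable_rpow_neg_one_add_norm_sq (by norm_num)
  constructor
  · exact (h0.comp_div hε.ne').comp_sub_right c
  · rw [MeasureTheory.integral_sub_right_eq_self (fun t : ℝ => (1 + ‖t / ε‖ ^ 2) ^ (-(7 / 4 : ℝ) / 2)) c,
      MeasureTheory.Measure.integral_comp_div (fun t : ℝ => (1 + ‖t‖ ^ 2) ^ (-(7 / 4 : ℝ) / 2)) ε, abs_of_pos hε, smul_eq_mul]

lemma maj_hyp (j k q : ℕ) (hj : (j : ℝ) ≤ Real.logb 2 (k : ℝ) - 2) (hj1 : 1 ≤ j) (hq : q ∣ qlcm j) :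
    2 * q < 2 ^ k := by
  have hk : 0 < k := by
    rcases Nat.eq_zero_or_pos k with h | h
    · subst h
      simp at hj
      have : (0:ℝ) ≤ j := by positivity
      linarith
    · exact h
  have hjk : 2 ^ (j + 2) ≤ k := by
    have h1 : ((j + 2 : ℕ) : ℝ) ≤ Real.logb 2 k := by push_cast; linarith
    rw [Real.le_logb_iff_rpow_le (by norm_num) (by exact_mod_cast hk), Real.rpow_natCast] at h1
    exact_mod_cast h1
  have hb : qlcm j * 4 ≤ 4 ^ (2 ^ j) := maj_lcm_bound j
  have hpos : 0 < qlcm j := by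
    have : qlcm j ≠ 0 := by
      unfold qlcm
      rw [Ne, Finset.lcm_eq_zero_iff]
      simp
    omega
  have hle := Nat.le_of_dvd hpos hq
  have h4 : (4:ℕ) ^ (2 ^ j) ≤ 2 ^ k := by
    rw [show (4:ℕ) = 2 ^ 2 by norm_num, ← pow_mul]
    apply Nat.pow_le_pow_right (by norm_num)
    rw [pow_add] at hjk
    omega
  omega

lemma maj_arc (d : ℕ) (hd : 5 ≤ d) (q a j k : ℕ) (hq1 : 1 ≤ q) (ha0 : 0 < a) (ha : Nat.Coprime a q)
    (hqk : 2 * q < 2 ^ k) (hq : q ∣ qlcm j) :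
    (∫ t in FareyArc k a q, ⨆ (α : Fin d → ℝ) (_ : α ∉ OmegaJK d j k),
              ‖sHat (d := d) (((2 : ℝ) ^ (2 * k))⁻¹) t α‖) ≤
      (majK ^ d * (Real.exp (1/2) * 2 ^ d * d.factorial)) * (q:ℝ) ^ (-(d:ℝ)/2) *
       (((2 : ℝ) ^ (2 * k))⁻¹) ^ (-((d : ℝ) - 2) / 2) * (2 : ℝ) ^ (-(j : ℝ) * ((d : ℝ) - 2) / 4) *
        ∫ u : ℝ, (1 + ‖u‖ ^ 2) ^ (-(7 / 4 : ℝ) / 2) := by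
  haveI : NeZero q := ⟨by omega⟩
  have hK := majK_pos
  set B : ℝ := (majK ^ d * (Real.exp (1/2) * 2 ^ d * d.factorial)) * (q:ℝ) ^ (-(d:ℝ)/2) *
       (((2 : ℝ) ^ (2 * k))⁻¹) ^ (-(d:ℝ)/2) * (2 : ℝ) ^ (-(j : ℝ) * ((d : ℝ) - 2) / 4) with hB
  have hB0 : 0 ≤ B := by positivity
  have hε : (0:ℝ) < ((2 : ℝ) ^ (2 * k))⁻¹ := by positivity
  obtain ⟨hi, he⟩ := maj_integral ((a:ℝ)/q) (((2 : ℝ) ^ (2 * k))⁻¹) hε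
  have hg0 : ∀ t : ℝ, 0 ≤ B * (1 + ‖(t - (a:ℝ)/q) / ((2 : ℝ) ^ (2 * k))⁻¹‖ ^ 2) ^ (-(7 / 4 : ℝ) / 2) := fun t => by positivity
  calc _ ≤ ∫ t in FareyArc k a q, B * (1 + ‖(t - (a:ℝ)/q) / ((2 : ℝ) ^ (2 * k))⁻¹‖ ^ 2) ^ (-(7 / 4 : ℝ) / 2) := by
        apply MeasureTheory.integral_mono_of_nonneg
        · exact Filter.Eventually.of_forall fun t =>
            Real.iSup_nonneg fun α => Real.iSup_nonneg fun _ => norm_nonneg _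
        · exact (hi.const_mul B).integrableOn
        · refine MeasureTheory.ae_restrict_of_forall_mem (maj_farey_meas k a q) fun t ht => ?_
          refine Real.iSup_le (fun α => Real.iSup_le (fun hα => ?_) (hg0 t)) (hg0 t)
          have h := maj_ptwise d hd q a ha (t - (a:ℝ)/q) j k (maj_farey hq1 hqk ha0 ha ht) (by omega) hq α hα
          rwa [add_sub_cancel] at h
    _ ≤ ∫ t : ℝ, B * (1 + ‖(t - (a:ℝ)/q) / ((2 : ℝ) ^ (2 * k))⁻¹‖ ^ 2) ^ (-(7 / 4 : ℝ) / 2) :=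
        MeasureTheory.setIntegral_le_integral (hi.const_mul B) (Filter.Eventually.of_forall hg0)
    _ = _ := by
        rw [MeasureTheory.integral_const_mul, he, hB,
          show -((d : ℝ) - 2) / 2 = -(d:ℝ)/2 + 1 by ring, Real.rpow_add hε, Real.rpow_one]
        ring

/-- **Major-arc estimate over denominators dividing `q_j`** -/
theorem major_arc_estimate (d : ℕ) (hd : 5 ≤ d) :
    ∃ C : ℝ, 0 < C ∧ ∀ (k j : ℕ), 1 ≤ j → (j : ℝ) ≤ Real.logb 2 (k : ℝ) - 2 →
      (∑ q ∈ (Finset.Icc 1 (2 ^ k)).filter (fun q => q ∣ qlcm j),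
        ∑ a ∈ (Finset.Icc 1 q).filter (fun a => Nat.Coprime a q),
          ∫ t in FareyArc k a q,
            ⨆ (α : Fin d → ℝ) (_ : α ∉ OmegaJK d j k),
              ‖sHat (d := d) (((2 : ℝ) ^ (2 * k))⁻¹) t α‖)
        ≤ C * (((2 : ℝ) ^ (2 * k))⁻¹) ^ (-((d : ℝ) - 2) / 2) *
            (2 : ℝ) ^ (-(j : ℝ) * ((d : ℝ) - 2) / 4) := by
  have hK := majK_pos
  set M : ℝ := majK ^ d * (Real.exp (1/2) * 2 ^ d * d.factorial) with hM
  have hM0 : 0 ≤ M := by positivity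
  set I0 : ℝ := ∫ u : ℝ, (1 + ‖u‖ ^ 2) ^ (-(7 / 4 : ℝ) / 2) with hI0
  have hI : 0 ≤ I0 := MeasureTheory.integral_nonneg fun u => by positivity
  have hsum : Summable fun q : ℕ => (q:ℝ) ^ (-(3/2) : ℝ) := Real.summable_nat_rpow.2 (by norm_num)
  set S : ℝ := ∑' q : ℕ, (q:ℝ) ^ (-(3/2) : ℝ) with hS
  have hS0 : 0 ≤ S := tsum_nonneg fun q => by positivity
  refine ⟨M * I0 * S + 1, by positivity, fun k j hj1 hj => ?_⟩
  set E : ℝ := (((2 : ℝ) ^ (2 * k))⁻¹) ^ (-((d : ℝ) - 2) / 2) with hE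
  set J : ℝ := (2 : ℝ) ^ (-(j : ℝ) * ((d : ℝ) - 2) / 4) with hJ
  have hE0 : 0 ≤ E := by positivity
  have hJ0 : 0 ≤ J := by positivity
  have hd5 : (5:ℝ) ≤ d := by exact_mod_cast hd
  calc _ ≤ ∑ q ∈ (Finset.Icc 1 (2 ^ k)).filter (fun q => q ∣ qlcm j), (M * E * J * I0) * (q:ℝ) ^ (-(3/2) : ℝ) := by
        refine Finset.sum_le_sum fun q hq => ?_
        rw [Finset.mem_filter, Finset.mem_Icc] at hq
        obtain ⟨⟨hq1, _⟩, hqd⟩ := hq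
        have hq1' : (1:ℝ) ≤ q := by exact_mod_cast hq1
        have hqk := maj_hyp j k q hj hj1 hqd
        calc _ ≤ ∑ a ∈ (Finset.Icc 1 q).filter (fun a => Nat.Coprime a q), M * (q:ℝ) ^ (-(d:ℝ)/2) * E * J * I0 := by
              refine Finset.sum_le_sum fun a ha => ?_
              rw [Finset.mem_filter, Finset.mem_Icc] at ha
              exact maj_arc d hd q a j k hq1 ha.1.1 ha.2 hqk hqd
          _ ≤ q * (M * (q:ℝ) ^ (-(d:ℝ)/2) * E * J * I0) := by
              rw [Finset.sum_const, nsmul_eq_mul]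
              refine mul_le_mul_of_nonneg_right ?_ (by positivity)
              have := (Finset.card_filter_le (Finset.Icc 1 q) (fun a => Nat.Coprime a q))
              rw [Nat.card_Icc, Nat.add_sub_cancel] at this
              exact_mod_cast this
          _ = (M * E * J * I0) * (q:ℝ) ^ (1 + -(d:ℝ)/2) := by
              rw [Real.rpow_add (by linarith), Real.rpow_one]; ring
          _ ≤ _ := by
              refine mul_le_mul_of_nonneg_left (Real.rpow_le_rpow_of_exponent_le hq1' ?_) (by positivity)
              linarith
    _ = (M * E * J * I0) * ∑ q ∈ (Finset.Icc 1 (2 ^ k)).filter (fun q => q ∣ qlcm j), (q:ℝ) ^ (-(3/2) : ℝ) := by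
        rw [Finset.mul_sum]
    _ ≤ (M * E * J * I0) * S := by
        refine mul_le_mul_of_nonneg_left (hsum.sum_le_tsum _ fun q _ => by positivity) (by positivity)
    _ ≤ _ := by
        have : 0 ≤ E * J := by positivity
        nlinarith
end
end
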